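/- arXiv:1805.02213 — 2 statements merged into one kernel-verified Lean document; each statement's English description precedes it below -/
import Mathlib

section
/- Let σ be an irreducible incommensurable multiscale substitution scheme in ℝ^d which is normalized, i.e. vol T_i = 1 for all 1 ≤ i ≤ n (so that α_ij^(k) = β_ij^(k) for all i, j, k). Let {π_m} be a Kakutani sequence of partitions of a prototile T_i ∈ τ_σ, let V_m denote the maximal volume of a tile in π_m, and set b_hj = Σ_{k=1}^{k_hj} (1 − (β_hj^(k))^d)/d. Then the matrix Q_σ has positive entries and all its rows are equal; writing q_h for the common entry in column h of Q_σ, for every 1 ≤ j ≤ n the number of tiles of type j in π_m, multiplied by V_m, converges to Σ_{h=1}^n b_hj·q_h as m → ∞, and this limit is independent of i. -/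
/-!
The tiles produced from `T i` correspond to directed paths from `i` in the graph whose edges are the
substitution tiles, an edge having length `-log (β ^ d)`; a tile of volume `v` corresponds to a path
of length `-log v`. As the volumes of the pieces of a tile add up to its volume, the numbers
`β ^ d` are the transition probabilities of an irreducible Markov chain with matrix `M_σ`.

The partition `π_m` is obtained by substituting exactly the tiles of volume greater than `V_m`, so
the number of its tiles of type `j` is a combination of increments of the functions `A h i t`, the
number of paths from `i` to `h` of length less than `t`, at `t = -log V_m`
(`IsKakutaniSeq.countType_eq`). Such an increment over `[t - ℓ, t)` contributes
`c_h (1 - exp (-ℓ))` to the limit if `exp (-t) * A h i t` tends to `c_h`.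

That this limit exists and does not depend on `i` is a renewal theorem
(`IsCounting.exists_limit`). The function `exp (-t) * A h i t` is, up to an exponentially small
error, an average of its earlier values. If it is nearly maximal at some late time, it is nearly
maximal at all earlier times differing from it by a path length; incommensurability makes these
times `ε`-dense (`pathLen_dense`), monotonicity of `A` fills the gaps, and the maximum principle
`le_of_window` carries the resulting lower bound to all later times. Integrating the renewal
equation against a stationary vector identifies the limit (`IsCounting.limit_mul`).

Finally, the columns of `adj (1 - M_σ)` are harmonic for `M_σ`, hence constant, its rows are
stationary, and its diagonal entries are positive (`adjugate_rows`, `adjugate_stationary`,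
`adjugate_diag_pos`); its common row therefore serves as the stationary vector, and the mean edge
length is `d` times the denominator in the definition of `Q_σ`.
-/

open MeasureTheory Filter Topology
open scoped Pointwise

noncomputable section

/-- Euclidean space `ℝ^d`. -/
abbrev Euc (d : ℕ) : Type := EuclideanSpace ℝ (Fin d)

/-- A tile in `ℝ^d`: a bounded Lebesgue measurable set of positive measure whose
boundary has measure zero. -/
def IsTile {d : ℕ} (T : Set (Euc d)) : Prop :=
  Bornology.IsBounded T ∧ NullMeasurableSet T volume ∧ 0 < volume T ∧
    volume (frontier T) = 0

/-- A multiscale substitution scheme in `ℝ^d` on `n` prototiles `T 1, …, T n`,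
with `numSub i j` substitution tiles of type `j` in `ω(T i)`, scaling constants
`scale i j k`, constants of substitution
`β_ij^(k) = (vol T_j / vol T_i)^(1/d) · α_ij^(k) ∈ (0,1)`, and a nonempty family
of substitution rules, each rule assigning to every prototile `T i` a partition of
`T i` into sets isometric to the substitution tiles `scale i j k • T j`. -/
structure MSScheme (d n : ℕ) where
  T : Fin n → Set (Euc d)
  tile : ∀ i, IsTile (T i)
  numSub : Fin n → Fin n → ℕ
  scale : (i j : Fin n) → Fin (numSub i j) → ℝ
  scale_pos : ∀ i j k, 0 < scale i j k
  beta_pos : ∀ i j k,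
    0 < ((volume (T j)).toReal / (volume (T i)).toReal) ^ (1 / (d : ℝ)) * scale i j k
  beta_lt_one : ∀ i j k,
    ((volume (T j)).toReal / (volume (T i)).toReal) ^ (1 / (d : ℝ)) * scale i j k < 1
  rules : Set ((i j : Fin n) → Fin (numSub i j) → Set (Euc d))
  rules_nonempty : rules.Nonempty
  rules_iso : ∀ ϱ ∈ rules, ∀ i j k, ∃ φ : Euc d ≃ᵢ Euc d,
    ϱ i j k = φ '' (scale i j k • T j)
  rules_disjoint : ∀ ϱ ∈ rules, ∀ i : Fin n, ∀ p q : Σ j : Fin n, Fin (numSub i j),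
    p ≠ q → Disjoint (interior (ϱ i p.1 p.2)) (interior (ϱ i q.1 q.2))
  rules_cover : ∀ ϱ ∈ rules, ∀ i : Fin n,
    (⋃ p : Σ j : Fin n, Fin (numSub i j), ϱ i p.1 p.2) = T i

/-- The constants of substitution `β_ij^(k) = (vol T_j / vol T_i)^(1/d) · α_ij^(k)`. -/
def MSScheme.beta {d n : ℕ} (σ : MSScheme d n) (i j : Fin n)
    (k : Fin (σ.numSub i j)) : ℝ :=
  ((volume (σ.T j)).toReal / (volume (σ.T i)).toReal) ^ (1 / (d : ℝ)) * σ.scale i j k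

/-- A labeled tile: a subset of `ℝ^d` together with a type label. -/
structure LTile (d n : ℕ) where
  carrier : Set (Euc d)
  type : Fin n

noncomputable instance {d n : ℕ} : DecidableEq (LTile d n) := Classical.decEq _

/-- `SubstitutesTo σ S P` : the labeled tile `S`, a rescaled isometric copy
`φ (a • T_{type S})` of the prototile of its type, is partitioned by the collection
`P` obtained by applying some substitution rule of the scheme,
`ϱ(a·φ(T_i)) = a·φ(ϱ(T_i))`, with the types of the pieces given by the scheme. -/
def SubstitutesTo {d n : ℕ} (σ : MSScheme d n) (S : LTile d n)
    (P : Finset (LTile d n)) : Prop :=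
  ∃ ϱ ∈ σ.rules, ∃ a : ℝ, 0 < a ∧ ∃ φ : Euc d ≃ᵢ Euc d,
    S.carrier = φ '' (a • σ.T S.type) ∧
    P = Finset.image
      (fun p : Σ j : Fin n, Fin (σ.numSub S.type j) =>
        (⟨φ '' (a • ϱ S.type p.1 p.2), p.1⟩ : LTile d n)) Finset.univ

open Classical in
/-- The tiles of maximal volume in a partition. -/
def maxTiles {d n : ℕ} (P : Finset (LTile d n)) : Finset (LTile d n) :=
  P.filter fun S => ∀ S' ∈ P, volume S'.carrier ≤ volume S.carrier

/-- A Kakutani sequence of partitions of the prototile `T i`: start with the trivial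
partition, and at each step substitute exactly the tiles of maximal volume, each
according to an arbitrarily and independently chosen substitution rule. -/
def IsKakutaniSeq {d n : ℕ} (σ : MSScheme d n) (i : Fin n)
    (π : ℕ → Finset (LTile d n)) : Prop :=
  π 0 = {(⟨σ.T i, i⟩ : LTile d n)} ∧
  ∀ m, ∃ repl : LTile d n → Finset (LTile d n),
    (∀ S ∈ maxTiles (π m), SubstitutesTo σ S (repl S)) ∧
    π (m + 1) = (π m \ maxTiles (π m)) ∪ (maxTiles (π m)).biUnion repl

/-- A generation sequence of partitions of the prototile `T i`: start with the trivial
partition, and at each step substitute all tiles, each according to an arbitrarily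
and independently chosen substitution rule. -/
def IsGenSeq {d n : ℕ} (σ : MSScheme d n) (i : Fin n)
    (δ : ℕ → Finset (LTile d n)) : Prop :=
  δ 0 = {(⟨σ.T i, i⟩ : LTile d n)} ∧
  ∀ m, ∃ repl : LTile d n → Finset (LTile d n),
    (∀ S ∈ δ m, SubstitutesTo σ S (repl S)) ∧
    δ (m + 1) = (δ m).biUnion repl

/-- A marking sequence of a sequence of partitions of `U`: finite sets of (distinct)
points of `U` such that every tile of the `m`-th partition contains exactly one point
of `x m`. -/
def IsMarking {d n : ℕ} (U : Set (Euc d)) (γ : ℕ → Finset (LTile d n))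
    (x : ℕ → Finset (Euc d)) : Prop :=
  ∀ m, (↑(x m) : Set (Euc d)) ⊆ U ∧
    ∀ S ∈ γ m, ∃! p, p ∈ x m ∧ p ∈ S.carrier

/-- An `r`-marking sequence: finite sets of (distinct) points of `U` such that every
tile of type `r` of the `m`-th partition contains exactly one point of `x m`, and
every point of `x m` lies in a tile of type `r`. -/
def IsRMarking {d n : ℕ} (U : Set (Euc d)) (γ : ℕ → Finset (LTile d n))
    (r : Fin n) (x : ℕ → Finset (Euc d)) : Prop :=
  ∀ m, (↑(x m) : Set (Euc d)) ⊆ U ∧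
    (∀ S ∈ γ m, S.type = r → ∃! p, p ∈ x m ∧ p ∈ S.carrier) ∧
    ∀ p ∈ x m, ∃ S ∈ γ m, S.type = r ∧ p ∈ S.carrier

/-- A sequence of finite sets of points is uniformly distributed in `U` if the
normalized sampling averages of every continuous function converge to its
normalized Lebesgue integral over `U`. -/
def MarkingUD {d : ℕ} (U : Set (Euc d)) (x : ℕ → Finset (Euc d)) : Prop :=
  ∀ f : Euc d → ℝ, ContinuousOn f U →
    Tendsto (fun m => (∑ p ∈ x m, f p) / ((x m).card : ℝ)) atTop
      (𝓝 ((∫ t in U, f t) / (volume U).toReal))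

/-- Irreducibility: every type `j` is produced from every prototile `T i` by some
finite (positive) number of substitutions. -/
def MSScheme.Irreducible {d n : ℕ} (σ : MSScheme d n) : Prop :=
  ∀ i j : Fin n, Relation.TransGen (fun a b => 0 < σ.numSub a b) i j

/-- `σ.IsClosedPathLogVol i a` : some tile of type `i` produced from `T i` by finitely
many substitutions has `log (vol T' / vol T_i) = a`; equivalently, `a` is the sum of
`log ((β_ij^(k))^d)` along some closed path from `i` to `i` in the associated graph. -/
def MSScheme.IsClosedPathLogVol {d n : ℕ} (σ : MSScheme d n)
    (i : Fin n) (a : ℝ) : Prop :=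
  ∃ m : ℕ, 0 < m ∧ ∃ p : Fin (m + 1) → Fin n, p 0 = i ∧ p (Fin.last m) = i ∧
    ∃ e : (t : Fin m) → Fin (σ.numSub (p t.castSucc) (p t.succ)),
      a = ∑ t : Fin m, Real.log (σ.beta (p t.castSucc) (p t.succ) (e t) ^ d)

/-- Incommensurability: there are tiles `T'` of type `i` produced from `T i` and `T''`
of type `j` produced from `T j` with `log (vol T' / vol T_i)` not a rational multiple
of `log (vol T'' / vol T_j)`. -/
def MSScheme.Incommensurable {d n : ℕ} (σ : MSScheme d n) : Prop :=
  ∃ (i j : Fin n) (a b : ℝ), σ.IsClosedPathLogVol i a ∧ σ.IsClosedPathLogVol j b ∧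
    ∀ q : ℚ, a ≠ (q : ℝ) * b

/-- The matrix `(M_σ)_ij = Σ_k (β_ij^(k))^d`. -/
def Mmat {d n : ℕ} (σ : MSScheme d n) : Matrix (Fin n) (Fin n) ℝ :=
  Matrix.of fun i j => ∑ k : Fin (σ.numSub i j), σ.beta i j k ^ d

/-- The matrix `(M'_σ)_ij = Σ_k (β_ij^(k))^d · log β_ij^(k)`. -/
def M'mat {d n : ℕ} (σ : MSScheme d n) : Matrix (Fin n) (Fin n) ℝ :=
  Matrix.of fun i j => ∑ k : Fin (σ.numSub i j), σ.beta i j k ^ d * Real.log (σ.beta i j k)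

/-- `Q_σ = adj (I − M_σ) / (− tr (adj (I − M_σ) · M'_σ))`. -/
def Qmat {d n : ℕ} (σ : MSScheme d n) : Matrix (Fin n) (Fin n) ℝ :=
  (-(Matrix.trace ((1 - Mmat σ).adjugate * M'mat σ)))⁻¹ • (1 - Mmat σ).adjugate

/-- The number of tiles of type `r` in a partition. -/
def countType {d n : ℕ} (P : Finset (LTile d n)) (r : Fin n) : ℕ :=
  (P.filter fun S => S.type = r).card

/-- The union of the tiles of type `r` in a partition. -/
def typeUnion {d n : ℕ} (P : Finset (LTile d n)) (r : Fin n) : Set (Euc d) :=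
  ⋃ S ∈ P.filter (fun S => S.type = r), S.carrier

/-- A fixed scale scheme: all scaling constants equal the contraction constant `α`. -/
def MSScheme.FixedScale {d n : ℕ} (σ : MSScheme d n) (α : ℝ) : Prop :=
  α ∈ Set.Ioo (0 : ℝ) 1 ∧ ∀ i j k, σ.scale i j k = α

/-- The substitution matrix `S_ij = k_ij` (as a real matrix). -/
def Smat {d n : ℕ} (σ : MSScheme d n) : Matrix (Fin n) (Fin n) ℝ :=
  Matrix.of fun i j => (σ.numSub i j : ℝ)

/-- A primitive scheme: some power of the substitution matrix is entrywise positive. -/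
def MSScheme.Primitive {d n : ℕ} (σ : MSScheme d n) : Prop :=
  ∃ k : ℕ, ∀ i j, 0 < (Smat σ ^ k) i j

end

set_option linter.unusedSectionVars false

section Renewal

/-! ### Path counting functions on a finite weighted graph -/

/-- Induction over the reals in steps of a fixed size `δ`, used for functions whose value at `t`
is determined by their values up to time `t - δ`. -/
lemma real_step_induction {δ : ℝ} (hδ : 0 < δ) (x : ℝ) {P : ℝ → Prop}
    (base : ∀ t ≤ x, P t) (step : ∀ t, x < t → (∀ s ≤ t - δ, P s) → P t) : ∀ t, P t := by
  have key : ∀ k : ℕ, ∀ t ≤ x + k * δ, P t := by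
    intro k
    induction k with
    | zero => intro t ht; exact base t (by simpa using ht)
    | succ k ih =>
      intro t ht
      rcases le_or_gt t x with h | h
      · exact base t h
      · refine step t h fun s hs => ih s ?_
        push_cast at ht
        linarith
  intro t
  obtain ⟨k, hk⟩ := exists_nat_ge ((t - x) / δ)
  refine key k t ?_
  rw [div_le_iff₀ hδ] at hk
  linarith

/- A finite directed graph with vertex set `ι`: `E i` is the set of edges leaving `i`, `tgt i e` is
the endpoint of `e`, and `len i e` is its length. Throughout, lengths are positive and
`∑ e, exp (-len i e) = 1`, so that `exp (-len i e)` are the transition probabilities of a Markov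
chain. -/
variable {ι : Type*} [Fintype ι] [DecidableEq ι] {E : ι → Type*} [∀ i, Fintype (E i)]
  {tgt : ∀ i, E i → ι} {len : ∀ i, E i → ℝ}

lemma exists_len_bounds (hpos : ∀ i e, 0 < len i e) :
    ∃ δ > 0, ∃ L > 0, ∀ i e, δ ≤ len i e ∧ len i e ≤ L := by
  rcases isEmpty_or_nonempty (Σ i, E i) with h | h
  · exact ⟨1, one_pos, 1, one_pos, fun i e => (h.false ⟨i, e⟩).elim⟩
  · obtain ⟨p, hp⟩ := Finite.exists_min (fun q : Σ i, E i => len q.1 q.2)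
    obtain ⟨r, hr⟩ := Finite.exists_max (fun q : Σ i, E i => len q.1 q.2)
    exact ⟨_, hpos p.1 p.2, _, hpos r.1 r.2, fun i e => ⟨hp ⟨i, e⟩, hr ⟨i, e⟩⟩⟩

variable (tgt len) in
/-- `A i t` is the number of directed paths from `i` to `h` (the empty path included) of length
less than `t`, expressed through the recursion on the first edge that characterizes it. -/
structure IsCounting (h : ι) (A : ι → ℝ → ℝ) : Prop where
  zero : ∀ i t, t ≤ 0 → A i t = 0
  step : ∀ i t, 0 < t → A i t = (if i = h then 1 else 0) + ∑ e, A (tgt i e) (t - len i e)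

variable (tgt len) in
/-- The number of directed paths from `i` to `h` with fewer than `m` edges and of length less than
`t`. -/
noncomputable def cnt (h : ι) : ℕ → ι → ℝ → ℝ
  | 0, _, _ => 0
  | m + 1, i, t =>
    if t ≤ 0 then 0 else (if i = h then 1 else 0) + ∑ e, cnt h m (tgt i e) (t - len i e)

lemma cnt_succ_eq {δ : ℝ} (hδ : ∀ i e, δ ≤ len i e) (h : ι) (m : ℕ) :
    ∀ i t, t ≤ m * δ → cnt tgt len h (m + 1) i t = cnt tgt len h m i t := by
  induction m with
  | zero => intro i t ht; simp at ht; simp [cnt, ht]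
  | succ m ih =>
    intro i t ht
    rw [cnt, cnt]
    congr 2
    refine Finset.sum_congr rfl fun e _ => ih _ _ ?_
    have := hδ i e
    push_cast at ht
    linarith

lemma cnt_stable {δ : ℝ} (hδ0 : 0 < δ) (hδ : ∀ i e, δ ≤ len i e) (h : ι) {m k : ℕ} (hmk : m ≤ k) :
    ∀ i t, t ≤ m * δ → cnt tgt len h k i t = cnt tgt len h m i t := by
  intro i t ht
  induction k, hmk using Nat.le_induction with
  | base => rfl
  | succ k hk ih =>
    rw [cnt_succ_eq hδ h k i t, ih]
    refine ht.trans ?_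
    gcongr

lemma exists_counting (hpos : ∀ i e, 0 < len i e) (h : ι) : ∃ A, IsCounting tgt len h A := by
  obtain ⟨δ, hδ0, L, -, hδL⟩ := exists_len_bounds hpos
  have hδ := fun i e => (hδL i e).1
  refine ⟨fun i t => cnt tgt len h ⌈t / δ⌉₊ i t, ?_, ?_⟩
  · intro i t ht
    have : ⌈t / δ⌉₊ = 0 := by
      rw [Nat.ceil_eq_zero]; exact div_nonpos_of_nonpos_of_nonneg ht hδ0.le
    simp [this, cnt]
  · intro i t ht
    have hle : t ≤ (⌈t / δ⌉₊ : ℝ) * δ := by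
      rw [← div_le_iff₀ hδ0]; exact Nat.le_ceil _
    rw [← cnt_succ_eq hδ h _ i t hle, cnt, if_neg ht.not_ge]
    congr 1
    refine Finset.sum_congr rfl fun e _ => ?_
    refine cnt_stable hδ0 hδ h ?_ _ _ ?_
    · apply Nat.ceil_mono
      have := hpos i e
      gcongr
      linarith
    · rw [← div_le_iff₀ hδ0]; exact Nat.le_ceil _

/-- Every vertex emits at least two edges, since each `exp (-len i e)` is less than `1`. -/
lemma two_le_card (hpos : ∀ i e, 0 < len i e) (hsum : ∀ i, ∑ e, Real.exp (-len i e) = 1) (i : ι) :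
    (2 : ℝ) ≤ Fintype.card (E i) := by
  have hne : (Finset.univ : Finset (E i)).Nonempty := by
    by_contra hc
    rw [Finset.not_nonempty_iff_eq_empty] at hc
    have := hsum i
    simp [hc] at this
  have h1 : ∑ e, Real.exp (-len i e) < ∑ _e : E i, (1 : ℝ) :=
    Finset.sum_lt_sum_of_nonempty hne fun e _ => by
      rw [Real.exp_lt_one_iff]; linarith [hpos i e]
  rw [hsum i] at h1
  simp at h1
  exact_mod_cast h1

namespace IsCounting

variable {h : ι} {A : ι → ℝ → ℝ}

lemma nonneg (hA : IsCounting tgt len h A) (hpos : ∀ i e, 0 < len i e) (i : ι) (t : ℝ) :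
    0 ≤ A i t := by
  obtain ⟨δ, hδ0, L, -, hδL⟩ := exists_len_bounds hpos
  refine real_step_induction (P := fun t => ∀ i, 0 ≤ A i t) hδ0 0 ?_ ?_ t i
  · intro t ht i; rw [hA.zero i t ht]
  · intro t ht ih i
    rw [hA.step i t ht]
    refine add_nonneg (by split_ifs <;> norm_num) (Finset.sum_nonneg fun e _ => ih _ ?_ _)
    linarith [(hδL i e).1]

lemma mono (hA : IsCounting tgt len h A) (hpos : ∀ i e, 0 < len i e) (i : ι) :
    Monotone (A i) := by
  obtain ⟨δ, hδ0, L, -, hδL⟩ := exists_len_bounds hpos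
  intro s t hst
  refine real_step_induction (P := fun t => ∀ i, ∀ s ≤ t, A i s ≤ A i t) hδ0 0 ?_ ?_ t i s hst
  · intro t ht i s hs; rw [hA.zero i t ht, hA.zero i s (hs.trans ht)]
  · intro t ht ih i s hs
    rcases le_or_gt s 0 with h0 | h0
    · rw [hA.zero i s h0]; exact hA.nonneg hpos i t
    rw [hA.step i t ht, hA.step i s h0]
    gcongr with e
    refine ih _ ?_ _ _ (by linarith)
    linarith [(hδL i e).1]

/-- The recursion in a form valid at all times. -/
lemma step' (hA : IsCounting tgt len h A) (hpos : ∀ i e, 0 < len i e) (i : ι) (t : ℝ) :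
    A i t = (if i = h ∧ 0 < t then 1 else 0) + ∑ e, A (tgt i e) (t - len i e) := by
  rcases le_or_gt t 0 with ht | ht
  · rw [hA.zero i t ht, if_neg (by simp [ht]), zero_add, Finset.sum_eq_zero]
    intro e _
    exact hA.zero _ _ (by linarith [hpos i e])
  · rw [hA.step i t ht]; simp [ht]

/-- Exponential growth bound; the slack `-1` absorbs the inhomogeneous term because every vertex
has at least two outgoing edges. -/
lemma exists_bound (hA : IsCounting tgt len h A) (hpos : ∀ i e, 0 < len i e)
    (hsum : ∀ i, ∑ e, Real.exp (-len i e) = 1) :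
    ∃ C > 0, ∀ i t, 0 ≤ t → A i t ≤ C * Real.exp t - 1 := by
  obtain ⟨δ, hδ0, L, hL, hδL⟩ := exists_len_bounds hpos
  have key : ∀ t, ∀ i, -L ≤ t → A i t ≤ Real.exp L * Real.exp t - 1 := by
    refine real_step_induction hδ0 0 ?_ ?_
    · intro t ht i hL
      rw [hA.zero i t ht, ← Real.exp_add]
      linarith [Real.one_le_exp (show 0 ≤ L + t by linarith)]
    · intro t ht ih i _
      rw [hA.step i t ht]
      calc (if i = h then (1:ℝ) else 0) + ∑ e, A (tgt i e) (t - len i e)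
          ≤ 1 + ∑ e, (Real.exp L * Real.exp t * Real.exp (-len i e) - 1) := by
            gcongr with e
            · split_ifs <;> norm_num
            · have := ih (t - len i e) (by linarith [(hδL i e).1]) (tgt i e)
                (by linarith [(hδL i e).2])
              rwa [sub_eq_add_neg t, Real.exp_add, ← mul_assoc] at this
        _ = 1 + (Real.exp L * Real.exp t - Fintype.card (E i)) := by
            rw [Finset.sum_sub_distrib, ← Finset.mul_sum, hsum i]; simp
        _ ≤ _ := by linarith [two_le_card hpos hsum i]
  exact ⟨Real.exp L, Real.exp_pos _, fun i t ht => key t i (by linarith)⟩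

end IsCounting

/-- Maximum principle: a subsolution of the homogeneous renewal equation never exceeds an upper
bound valid on a time window as long as the longest edge. -/
lemma le_of_window {f : ι → ℝ → ℝ} {δ L : ℝ} (hδ0 : 0 < δ)
    (hδL : ∀ i e, δ ≤ len i e ∧ len i e ≤ L)
    (hsum : ∀ i, ∑ e, Real.exp (-len i e) = 1)
    (hf : ∀ i t, 0 < t → f i t ≤ ∑ e, Real.exp (-len i e) * f (tgt i e) (t - len i e))
    {x B : ℝ} (hx : 0 ≤ x) (hB : ∀ i t, x - L ≤ t → t ≤ x → f i t ≤ B) :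
    ∀ i t, x - L ≤ t → f i t ≤ B := by
  have key : ∀ t, ∀ i, x - L ≤ t → f i t ≤ B := by
    refine real_step_induction hδ0 x (fun t ht i h => hB i t h ht) ?_
    intro t ht ih i _
    refine (hf i t (by linarith)).trans ?_
    calc _ ≤ ∑ e, Real.exp (-len i e) * B := by
          gcongr with e
          exact ih _ (by linarith [(hδL i e).1]) _ (by linarith [(hδL i e).2])
      _ = B := by rw [← Finset.sum_mul, hsum, one_mul]
  exact fun i t => key t i

variable (tgt len) in
/-- `PathLen i h s`: there is a directed path from `i` to `h` of total length `s`. -/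
inductive PathLen : ι → ι → ℝ → Prop
  | nil (i : ι) : PathLen i i 0
  | cons (i : ι) (e : E i) {h : ι} {s : ℝ} : PathLen (tgt i e) h s → PathLen i h (len i e + s)

lemma PathLen.trans {i j h : ι} {s t : ℝ} (h1 : PathLen tgt len i j s)
    (h2 : PathLen tgt len j h t) : PathLen tgt len i h (s + t) := by
  induction h1 with
  | nil i => simpa using h2
  | cons i e _ ih => rw [add_assoc]; exact .cons i e (ih h2)

lemma PathLen.nsmul {i : ι} {a : ℝ} (ha : PathLen tgt len i i a) (m : ℕ) :
    PathLen tgt len i i (m * a) := by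
  induction m with
  | zero => simpa using PathLen.nil i
  | succ m ih =>
    have := ih.trans ha
    convert this using 1; push_cast; ring

lemma PathLen.nonneg (hpos : ∀ i e, 0 < len i e) {i j : ι} {s : ℝ} (h1 : PathLen tgt len i j s) :
    0 ≤ s := by
  induction h1 with
  | nil i => exact le_rfl
  | cons i e _ ih => linarith [hpos i e]

/-- If a subsolution `f` is bounded by `B` from time `X` on, then going back in time along a path of
length `s` multiplies the deficiency `B - f` at most by `exp s`: the value at `t` is an average in
which the far end of the path has weight `exp (-s)`. -/
lemma PathLen.deficiency {f : ι → ℝ → ℝ} {L X B : ℝ} (hpos : ∀ i e, 0 < len i e)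
    (hL : ∀ i e, len i e ≤ L) (hL0 : 0 < L)
    (hsum : ∀ i, ∑ e, Real.exp (-len i e) = 1)
    (hf : ∀ i t, 0 < t → f i t ≤ ∑ e, Real.exp (-len i e) * f (tgt i e) (t - len i e))
    (hX : 0 ≤ X) (hB : ∀ i t, X ≤ t → f i t ≤ B) {i h : ι} {s : ℝ}
    (hp : PathLen tgt len i h s) :
    ∀ t, X + L ≤ t - s → B - f h (t - s) ≤ Real.exp s * (B - f i t) := by
  induction hp with
  | nil i => intro t _; simp
  | @cons i e h s hp ih =>
    intro t ht
    have hs := hp.nonneg hpos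
    have h1 := ih (t - len i e) (by linarith)
    have hlen := hpos i e
    have h2 : Real.exp (-len i e) * (B - f (tgt i e) (t - len i e)) ≤ B - f i t := by
      calc _ ≤ ∑ e', Real.exp (-len i e') * (B - f (tgt i e') (t - len i e')) := by
            refine Finset.single_le_sum (f := fun e' =>
              Real.exp (-len i e') * (B - f (tgt i e') (t - len i e'))) ?_ (Finset.mem_univ e)
            intro e' _
            refine mul_nonneg (Real.exp_pos _).le (sub_nonneg.2 (hB _ _ ?_))
            linarith [hL i e']
        _ = B - ∑ e', Real.exp (-len i e') * f (tgt i e') (t - len i e') := by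
            simp_rw [mul_sub]
            rw [Finset.sum_sub_distrib, ← Finset.sum_mul, hsum, one_mul]
        _ ≤ _ := by linarith [hf i t (by linarith)]
    have h3 : B - f (tgt i e) (t - len i e) ≤ Real.exp (len i e) * (B - f i t) := by
      have := mul_le_mul_of_nonneg_left h2 (Real.exp_pos (len i e)).le
      rwa [← mul_assoc, ← Real.exp_add, add_neg_cancel, Real.exp_zero, one_mul] at this
    rw [show t - (len i e + s) = t - len i e - s by ring, Real.exp_add]
    refine h1.trans ?_
    rw [mul_comm (Real.exp (len i e)), mul_assoc]
    gcongr

/-- Nonnegative integer combinations of two incommensurable positive numbers are eventually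
`ε`-dense. -/
lemma eventually_dense {a b : ℝ} (hb : 0 < b) (hab : Irrational (a / b)) {ε : ℝ}
    (hε : 0 < ε) : ∀ᶠ x in atTop, ∃ m n : ℕ, x ≤ m * a + n * b ∧ m * a + n * b ≤ x + ε := by
  have hd : Dense (AddSubgroup.closure {a, b} : Set ℝ) :=
    dense_addSubgroupClosure_pair_iff.2 hab
  obtain ⟨δ, ⟨hδ0, hδε⟩, hmem⟩ := hd.inter_open_nonempty (Set.Ioo 0 ε) isOpen_Ioo
    (Set.nonempty_Ioo.2 hε)
  obtain ⟨m, n, hmn⟩ := AddSubgroup.mem_closure_pair.1 hmem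
  simp only [zsmul_eq_mul] at hmn
  set K : ℕ := ⌈b / δ⌉₊ with hK
  set N : ℕ := K * (m.natAbs + n.natAbs) with hN
  filter_upwards [eventually_ge_atTop (N * (a + b))] with x hx
  set y := x - N * (a + b) with hy
  have hy0 : 0 ≤ y := by linarith
  set r := ⌊y / b⌋₊ with hr
  have hr1 : r * b ≤ y := by
    rw [← le_div_iff₀ hb]; exact Nat.floor_le (by positivity)
  have hr2 : y < (r + 1) * b := by
    rw [← div_lt_iff₀ hb]; exact Nat.lt_floor_add_one _
  set k := ⌈(y - r * b) / δ⌉₊ with hk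
  have hk1 : y - r * b ≤ k * δ := by
    rw [← div_le_iff₀ hδ0]; exact Nat.le_ceil _
  have hk2 : k * δ < y - r * b + δ := by
    have := Nat.ceil_lt_add_one (show 0 ≤ (y - r * b) / δ by
      apply div_nonneg _ hδ0.le; linarith)
    rw [← hk, ← sub_lt_iff_lt_add, lt_div_iff₀ hδ0] at this
    linarith
  have hkK : k ≤ K := by
    apply Nat.ceil_mono
    gcongr
    linarith
  have hm : 0 ≤ (N : ℤ) + k * m := by
    have h1 : (k : ℤ) * |m| ≤ K * (|m| + |n|) := by
      have : (k : ℤ) ≤ K := by exact_mod_cast hkK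
      have := abs_nonneg m; have := abs_nonneg n
      gcongr; linarith
    have h2 : -|m| ≤ m := neg_abs_le m
    have h3 : (k : ℤ) * (-|m|) ≤ k * m := by gcongr
    simp only [hN]; push_cast; linarith
  have hn : 0 ≤ (N : ℤ) + k * n := by
    have h1 : (k : ℤ) * |n| ≤ K * (|m| + |n|) := by
      have : (k : ℤ) ≤ K := by exact_mod_cast hkK
      have := abs_nonneg m; have := abs_nonneg n
      gcongr; linarith
    have h2 : -|n| ≤ n := neg_abs_le n
    have h3 : (k : ℤ) * (-|n|) ≤ k * n := by gcongr
    simp only [hN]; push_cast; linarith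
  obtain ⟨p, hp⟩ := Int.eq_ofNat_of_zero_le hm
  obtain ⟨q, hq⟩ := Int.eq_ofNat_of_zero_le hn
  have hp' : (p : ℝ) = N + k * m := by exact_mod_cast hp.symm
  have hq' : (q : ℝ) = N + k * n := by exact_mod_cast hq.symm
  have hval : (p : ℝ) * a + ((q + r : ℕ) : ℝ) * b = N * (a + b) + k * δ + r * b := by
    push_cast; rw [hp', hq', ← hmn]; ring
  refine ⟨p, q + r, ?_, ?_⟩ <;> rw [hval] <;> linarith

end Renewal

section RenewalLimit

/-! ### The renewal theorem -/

variable {ι : Type*} [Fintype ι] [DecidableEq ι] {E : ι → Type*} [∀ i, Fintype (E i)]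
  {tgt : ∀ i, E i → ι} {len : ∀ i, E i → ℝ}

lemma exp_step (i : ι) (e : E i) (t y : ℝ) :
    Real.exp (-len i e) * (Real.exp (-(t - len i e)) * y) = Real.exp (-t) * y := by
  rw [← mul_assoc, ← Real.exp_add]; ring_nf

namespace IsCounting

variable {h : ι} {A : ι → ℝ → ℝ}

/-- `exp (-t) * A i t` is a supersolution of the homogeneous renewal equation. -/
lemma super (hA : IsCounting tgt len h A) (i : ι) (t : ℝ) (ht : 0 < t) :
    ∑ e, Real.exp (-len i e) * (Real.exp (-(t - len i e)) * A (tgt i e) (t - len i e))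
      ≤ Real.exp (-t) * A i t := by
  simp_rw [exp_step]
  rw [← Finset.mul_sum, hA.step i t ht]
  gcongr
  split_ifs <;> simp

/-- `exp (-t) * (A i t + 1)` is a subsolution of the homogeneous renewal equation: the added `1`
compensates the inhomogeneous term because each vertex emits at least two edges. -/
lemma sub (hA : IsCounting tgt len h A) (hpos : ∀ i e, 0 < len i e)
    (hsum : ∀ i, ∑ e, Real.exp (-len i e) = 1) (i : ι) (t : ℝ) (ht : 0 < t) :
    Real.exp (-t) * (A i t + 1) ≤
    ∑ e, Real.exp (-len i e) * (Real.exp (-(t - len i e)) * (A (tgt i e) (t - len i e) + 1)) := by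
  simp_rw [exp_step]
  rw [← Finset.mul_sum, hA.step i t ht, Finset.sum_add_distrib]
  refine mul_le_mul_of_nonneg_left ?_ (Real.exp_pos _).le
  have := two_le_card hpos hsum i
  simp only [Finset.sum_const, Finset.card_univ, nsmul_eq_mul, mul_one]
  split_ifs <;> linarith

/-- The renewal theorem, with a limit that does not depend on the starting vertex. Let `α` be the
upper limit of `exp (-t) * (A i t + 1)`. When this is close to `α` at a late time `t`, it is close to
`α` at all times `t - s` with `s` a path length. These times are `ε`-dense in a whole window, and
`A` is monotone, so `exp (-t) * A i t` is nearly at least `α` on that window and hence, by the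
maximum principle, ever after. -/
theorem exists_limit [Nonempty ι] (hA : IsCounting tgt len h A) (hpos : ∀ i e, 0 < len i e)
    (hsum : ∀ i, ∑ e, Real.exp (-len i e) = 1)
    (hdense : ∀ ε > 0, ∀ i h, ∀ᶠ x in atTop, ∃ s, x ≤ s ∧ s ≤ x + ε ∧ PathLen tgt len i h s) :
    ∃ c, ∀ i, Tendsto (fun t => Real.exp (-t) * A i t) atTop (𝓝 c) := by
  obtain ⟨δ, hδ0, L, hL0, hδL⟩ := exists_len_bounds hpos
  have hA0 := hA.nonneg hpos
  -- eventual upper bounds; their infimum is the upper limit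
  set U : Set ℝ := {B | ∃ x, ∀ t ≥ x, ∀ i, Real.exp (-t) * (A i t + 1) ≤ B} with hU
  have hUne : U.Nonempty := by
    obtain ⟨C, hC, hb⟩ := hA.exists_bound hpos hsum
    refine ⟨C, 0, fun t ht i => ?_⟩
    have := mul_le_mul_of_nonneg_left (hb i t ht) (Real.exp_pos (-t)).le
    have h1 : Real.exp (-t) * Real.exp t = 1 := by rw [← Real.exp_add]; simp
    linear_combination this + C * h1
  have hU0 : ∀ B ∈ U, 0 ≤ B := by
    rintro B ⟨x, hx⟩
    refine le_trans ?_ (hx x le_rfl (Classical.arbitrary ι))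
    have := hA0 (Classical.arbitrary ι) x
    positivity
  have hUb : BddBelow U := ⟨0, hU0⟩
  set α := sInf U with hα
  have hα0 : 0 ≤ α := le_csInf hUne hU0
  have hupper : ∀ κ > 0, ∃ x, ∀ t ≥ x, ∀ i, Real.exp (-t) * (A i t + 1) ≤ α + κ := by
    intro κ hκ
    obtain ⟨B, ⟨x, hx⟩, hB⟩ := exists_lt_of_csInf_lt hUne (show sInf U < α + κ by linarith)
    exact ⟨x, fun t ht i => (hx t ht i).trans hB.le⟩
  have hlower : ∀ κ > 0, ∀ x, ∃ t ≥ x, ∃ i, α - κ < Real.exp (-t) * (A i t + 1) := by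
    intro κ hκ x
    by_contra hc
    push Not at hc
    have : α ≤ α - κ := csInf_le hUb ⟨x, hc⟩
    linarith
  have hmain : ∀ η > 0, ∃ x, ∀ t ≥ x, ∀ i, α - η ≤ Real.exp (-t) * A i t := by
    intro η hη
    -- `ε`, `κ` and the choice of `t` each account for a loss of `η / 3`
    set ε := η / (3 * (α + 1)) with hε
    have hε0 : 0 < ε := by positivity
    have hεα : ε * α ≤ η / 3 := by
      rw [hε, div_mul_eq_mul_div, div_le_div_iff₀ (by positivity) (by positivity)]
      nlinarith
    have hd : ∀ᶠ x in atTop, ∀ i h, ∃ s, x ≤ s ∧ s ≤ x + ε ∧ PathLen tgt len i h s := by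
      rw [eventually_all]; intro i; rw [eventually_all]; exact hdense ε hε0 i
    obtain ⟨T₀, hT₀⟩ := eventually_atTop.1 hd
    set S := T₀ + L + ε with hS
    set κ := η / (6 * Real.exp S) with hκ
    have hκ0 : 0 < κ := by positivity
    have hκS : Real.exp S * (2 * κ) = η / 3 := by
      rw [hκ]; field_simp; norm_num
    obtain ⟨X, hX⟩ := hupper κ hκ0
    obtain ⟨Y, hY⟩ := eventually_atTop.1
      ((Real.tendsto_exp_neg_atTop_nhds_zero).eventually_le_const (show 0 < η / 3 by positivity))
    set X' := max X 0
    obtain ⟨t, ht, i, hti⟩ := hlower κ hκ0 (max (X' + L + S) (max (Y + S) (T₀ + L)))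
    simp only [ge_iff_le, max_le_iff] at ht
    obtain ⟨ht1, ht2, ht3⟩ := ht
    have hX'0 : 0 ≤ X' := le_max_right _ _
    have hX'X : X ≤ X' := le_max_left _ _
    have hwin : ∀ h' y, t - T₀ - L ≤ y → y ≤ t - T₀ → α - η ≤ Real.exp (-y) * A h' y := by
      intro h' y hy1 hy2
      obtain ⟨s, hs1, hs2, hp⟩ := hT₀ (t - y) (by linarith) i h'
      have hdef := hp.deficiency (f := fun i t => Real.exp (-t) * (A i t + 1)) (B := α + κ)
        hpos (fun i e => (hδL i e).2) hL0 hsum (hA.sub hpos hsum) hX'0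
        (fun i t ht => hX t (hX'X.trans ht) i) t (by linarith)
      have h1 : Real.exp s * (α + κ - Real.exp (-t) * (A i t + 1)) ≤ η / 3 := by
        rw [← hκS]
        have : Real.exp s ≤ Real.exp S := Real.exp_le_exp.2 (by linarith)
        calc _ ≤ Real.exp s * (2 * κ) := by gcongr; linarith
          _ ≤ _ := by gcongr
      have h2 : Real.exp (-(t - s)) ≤ η / 3 := hY _ (by linarith)
      have h3 : α - 2 * η / 3 ≤ Real.exp (-(t - s)) * A h' (t - s) := by
        rw [mul_add, mul_one] at hdef
        linarith
      have h4 : A h' (t - s) ≤ A h' y := hA.mono hpos h' (by linarith)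
      have h5 : Real.exp (-y) = Real.exp (-(y - (t - s))) * Real.exp (-(t - s)) := by
        rw [← Real.exp_add]; ring_nf
      have h6 : 1 - ε ≤ Real.exp (-(y - (t - s))) := by
        have := Real.add_one_le_exp (-(y - (t - s)))
        linarith
      have h7 : Real.exp (-(y - (t - s))) ≤ 1 := by
        rw [Real.exp_le_one_iff]; linarith
      calc α - η ≤ α * (1 - ε) - 2 * η / 3 * 1 := by nlinarith
        _ ≤ α * Real.exp (-(y - (t - s))) - 2 * η / 3 * Real.exp (-(y - (t - s))) := by
            gcongr
        _ = Real.exp (-(y - (t - s))) * (α - 2 * η / 3) := by ring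
        _ ≤ Real.exp (-(y - (t - s))) * (Real.exp (-(t - s)) * A h' (t - s)) := by gcongr
        _ = Real.exp (-y) * A h' (t - s) := by rw [h5]; ring
        _ ≤ _ := by gcongr
    refine ⟨t - T₀ - L, fun u hu j => ?_⟩
    have := le_of_window (f := fun i t => -(Real.exp (-t) * A i t)) (B := -(α - η))
      hδ0 hδL hsum (x := t - T₀)
      (fun i t ht => by
        have := hA.super i t ht
        simp only [mul_neg, Finset.sum_neg_distrib]
        linarith) (by linarith)
      (fun i y h1 h2 => by linarith [hwin i y h1 h2]) j u hu
    linarith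
  refine ⟨α, fun i => ?_⟩
  rw [Metric.tendsto_atTop]
  intro η hη
  obtain ⟨x, hx⟩ := hupper (η / 2) (by positivity)
  obtain ⟨y, hy⟩ := hmain (η / 2) (by positivity)
  refine ⟨max x y, fun t ht => ?_⟩
  have h1 := hx t ((le_max_left _ _).trans ht) i
  have h2 := hy t ((le_max_right _ _).trans ht) i
  have := Real.exp_pos (-t)
  rw [Real.dist_eq, abs_lt]
  constructor <;> linarith

/-- The value of the renewal limit `c`: for `q` stationary for the Markov chain, `c` times the mean
edge length with respect to `q` equals `q h`. It results from summing the renewal equations against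
`q`, integrating over `[0, T]`, where everything telescopes to integrals over the windows
`[T - len i e, T]`, and letting `T` tend to infinity. -/
theorem limit_mul (hA : IsCounting tgt len h A) (hpos : ∀ i e, 0 < len i e)
    {c : ℝ} (hc : ∀ i, Tendsto (fun t => Real.exp (-t) * A i t) atTop (𝓝 c))
    (q : ι → ℝ)
    (hq : ∀ f : ι → ℝ, ∑ i, q i * ∑ e, Real.exp (-len i e) * f (tgt i e) = ∑ i, q i * f i) :
    c * ∑ i, q i * ∑ e, Real.exp (-len i e) * len i e = q h := by
  set g : ι → ℝ → ℝ := fun i t => Real.exp (-t) * A i t with hg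
  have hint : ∀ i a b, IntervalIntegrable (g i) volume a b := by
    intro i a b
    exact ((hA.mono hpos i).intervalIntegrable).continuousOn_mul (by fun_prop)
  have hg0 : ∀ i t, t ≤ 0 → g i t = 0 := fun i t ht => by simp [hg, hA.zero i t ht]
  have hzero : ∀ i l, 0 ≤ l → ∫ t in (-l)..0, g i t = 0 := by
    intro i l hl
    rw [intervalIntegral.integral_congr (g := fun _ => 0)]
    · simp
    · intro t ht
      rw [Set.uIcc_of_le (by linarith)] at ht
      exact hg0 i t ht.2
  have hshift : ∀ i l T, 0 ≤ l → (∫ t in (0:ℝ)..T, g i t) - ∫ t in (0:ℝ)..T, g i (t - l)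
      = ∫ t in (T - l)..T, g i t := by
    intro i l T hl
    rw [intervalIntegral.integral_comp_sub_right (fun t => g i t)]
    have h1 := intervalIntegral.integral_add_adjacent_intervals (hint i (0 - l) 0) (hint i 0 (T - l))
    have h2 := intervalIntegral.integral_add_adjacent_intervals (hint i 0 (T - l)) (hint i (T - l) T)
    have h3 := hzero i l hl
    rw [zero_sub] at *
    linarith
  have hlim : ∀ i l, 0 ≤ l → Tendsto (fun T => ∫ t in (T - l)..T, g i t) atTop (𝓝 (c * l)) := by
    intro i l hl
    rw [Metric.tendsto_atTop]
    intro η hη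
    obtain ⟨x, hx⟩ := Metric.tendsto_atTop.1 (hc i) (η / (l + 1)) (by positivity)
    refine ⟨x + l, fun T hT => ?_⟩
    have h1 : ∫ t in (T - l)..T, (g i t - c) = (∫ t in (T - l)..T, g i t) - c * l := by
      rw [intervalIntegral.integral_sub (hint i _ _) (by simp)]
      simp [mul_comm]
    rw [dist_eq_norm, ← h1]
    have h2 : ‖∫ t in (T - l)..T, (g i t - c)‖ ≤ η / (l + 1) * |T - (T - l)| := by
      apply intervalIntegral.norm_integral_le_of_norm_le_const
      intro t ht
      rw [Set.uIoc_of_le (by linarith)] at ht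
      have := hx t (by linarith [ht.1])
      rw [dist_eq_norm] at this
      exact this.le
    refine h2.trans_lt ?_
    rw [sub_sub_cancel, abs_of_nonneg hl, div_mul_eq_mul_div, div_lt_iff₀ (by positivity)]
    nlinarith
  -- the integrated renewal equation
  have heq : ∀ T, 0 ≤ T → ∑ i, q i * ∑ e, Real.exp (-len i e) *
      (∫ t in (T - len i e)..T, g (tgt i e) t) = q h * (1 - Real.exp (-T)) := by
    intro T hT
    have hi : ∀ i, ∫ t in (0:ℝ)..T, g i t = (if i = h then (1 - Real.exp (-T)) else 0) +
        ∑ e, Real.exp (-len i e) * ∫ t in (0:ℝ)..T, g (tgt i e) (t - len i e) := by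
      intro i
      have hint' : ∀ j l, IntervalIntegrable (fun t => g j (t - l)) volume 0 T := by
        intro j l
        have := (hint j (0 - l) (T - l)).comp_sub_right l
        simpa using this
      have h1 : ∫ t in (0:ℝ)..T, g i t = ∫ t in (0:ℝ)..T, ((if i = h then Real.exp (-t) else 0) +
          ∑ e, Real.exp (-len i e) * g (tgt i e) (t - len i e)) := by
        apply intervalIntegral.integral_congr_ae
        refine Eventually.of_forall fun t ht => ?_
        rw [Set.uIoc_of_le hT] at ht
        simp only [hg]
        simp_rw [exp_step]
        rw [hA.step i t ht.1, ← Finset.mul_sum, mul_add]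
        congr 1
        split_ifs <;> simp
      rw [h1, intervalIntegral.integral_add, intervalIntegral.integral_finsetSum]
      · congr 1
        · split_ifs
          · simp
          · simp
        · refine Finset.sum_congr rfl fun e _ => ?_
          rw [intervalIntegral.integral_const_mul]
      · intro e _
        exact (hint' _ _).const_mul _
      · split_ifs
        · exact Continuous.intervalIntegrable (by fun_prop) _ _
        · simp
      · have : (fun t => ∑ e, Real.exp (-len i e) * g (tgt i e) (t - len i e)) =
            ∑ e, fun t => Real.exp (-len i e) * g (tgt i e) (t - len i e) := by
          ext; simp
        rw [this]
        exact IntervalIntegrable.sum _ fun e _ => (hint' _ _).const_mul _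
    have h1 := hq fun i => ∫ t in (0:ℝ)..T, g i t
    have h2 : ∑ i, q i * ∫ t in (0:ℝ)..T, g i t = q h * (1 - Real.exp (-T)) +
        ∑ i, q i * ∑ e, Real.exp (-len i e) *
          ∫ t in (0:ℝ)..T, g (tgt i e) (t - len i e) := by
      rw [Finset.sum_congr rfl fun i _ => by rw [hi i, mul_add], Finset.sum_add_distrib]
      simp
    simp_rw [← fun i e => hshift (tgt i e) (len i e) T (hpos i e).le, mul_sub,
      Finset.sum_sub_distrib, mul_sub, Finset.sum_sub_distrib]
    rw [h1, h2]; ring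
  have hL : Tendsto (fun T => ∑ i, q i * ∑ e, Real.exp (-len i e) *
      (∫ t in (T - len i e)..T, g (tgt i e) t)) atTop
      (𝓝 (∑ i, q i * ∑ e, Real.exp (-len i e) * (c * len i e))) :=
    tendsto_finsetSum _ fun i _ => Tendsto.const_mul _ <| tendsto_finsetSum _ fun e _ =>
      Tendsto.const_mul _ (hlim _ _ (hpos i e).le)
  have hR : Tendsto (fun T => q h * (1 - Real.exp (-T))) atTop (𝓝 (q h * (1 - 0))) :=
    (Real.tendsto_exp_neg_atTop_nhds_zero.const_sub 1).const_mul _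
  have := tendsto_nhds_unique (hL.congr' ((eventually_ge_atTop 0).mono heq)) hR
  rw [sub_zero, mul_one] at this
  rw [← this, Finset.mul_sum]
  refine Finset.sum_congr rfl fun i _ => ?_
  rw [mul_left_comm, Finset.mul_sum]
  congr 1
  exact Finset.sum_congr rfl fun e _ => by ring

end IsCounting

end RenewalLimit

section Stochastic

/-! ### The adjugate of `1 - M` for an irreducible stochastic matrix `M` -/

open Matrix

variable {ι : Type*} [Fintype ι] [DecidableEq ι] {M : Matrix ι ι ℝ}

/-- A maximum of a function that is subharmonic at its maximizers spreads along the edges of the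
chain. -/
lemma propagate_max (hM0 : ∀ a b, 0 ≤ M a b) (hM1 : ∀ a, ∑ b, M a b = 1) {f : ι → ℝ} {m : ℝ}
    (hm : ∀ b, f b ≤ m) (hP : ∀ a, f a = m → f a ≤ ∑ b, M a b * f b)
    {a b : ι} (hab : Relation.TransGen (fun a b => 0 < M a b) a b) (ha : f a = m) : f b = m := by
  have step : ∀ a b, f a = m → 0 < M a b → f b = m := by
    intro a b ha hab
    have h1 : ∑ b, M a b * (m - f b) ≤ 0 := by
      simp_rw [mul_sub]
      rw [Finset.sum_sub_distrib, ← Finset.sum_mul, hM1]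
      linarith [hP a ha]
    have h2 : M a b * (m - f b) ≤ ∑ b, M a b * (m - f b) :=
      Finset.single_le_sum (f := fun b => M a b * (m - f b))
        (fun b _ => mul_nonneg (hM0 a b) (sub_nonneg.2 (hm b))) (Finset.mem_univ b)
    have h3 : m - f b ≤ 0 := by
      by_contra hc
      push Not at hc
      nlinarith [mul_pos hab hc]
    linarith [hm b]
  induction hab with
  | single h => exact step _ _ ha h
  | tail _ h ih => exact step _ _ ih h

lemma harmonic_const (hM0 : ∀ a b, 0 ≤ M a b) (hM1 : ∀ a, ∑ b, M a b = 1)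
    (hirr : ∀ a b, Relation.TransGen (fun a b => 0 < M a b) a b) {v : ι → ℝ} (hv : M *ᵥ v = v)
    (a b : ι) : v a = v b := by
  have : Nonempty ι := ⟨a⟩
  obtain ⟨x, hx⟩ := Finite.exists_max v
  have key : ∀ c, v c = v x := fun c =>
    propagate_max hM0 hM1 hx
      (fun d _ => by
        have := congrFun hv d
        simp only [mulVec, dotProduct] at this
        exact this.ge) (hirr x c) rfl
  rw [key a, key b]

/-- The diagonal cofactor at `h` is the value at `x = 1` of the determinant of `1 - x • M` with row
`h` replaced by the unit vector. This equals `1` at `x = 0` and, by the maximum principle, has no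
zero for `x ∈ [0, 1]`. -/
lemma adjugate_diag_pos (hM0 : ∀ a b, 0 ≤ M a b) (hM1 : ∀ a, ∑ b, M a b = 1)
    (hirr : ∀ a b, Relation.TransGen (fun a b => 0 < M a b) a b) (h : ι) :
    0 < (1 - M).adjugate h h := by
  rw [adjugate_apply]
  set D : ℝ → ℝ := fun x => ((1 - x • M).updateRow h (Pi.single h 1)).det with hD
  have hcont : Continuous D := by
    refine Continuous.matrix_det ?_
    refine Continuous.matrix_updateRow h ?_ continuous_const
    fun_prop
  have hD0 : D 0 = 1 := by
    have : (1 - (0:ℝ) • M).updateRow h (Pi.single h 1) = 1 := by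
      ext a b
      by_cases hah : a = h
      · subst hah; simp [Matrix.one_apply, Pi.single_apply, eq_comm]
      · simp [hah]
    simp only [hD, this, det_one]
  have hne : ∀ x ∈ Set.Icc (0:ℝ) 1, D x ≠ 0 := by
    intro x hx hdet
    obtain ⟨v, hv0, hv⟩ := exists_mulVec_eq_zero_iff.2 hdet
    have : Nonempty ι := ⟨h⟩
    have hvh : v h = 0 := by
      have := congrFun hv h
      simpa [mulVec, dotProduct, Pi.single_apply] using this
    have hva : ∀ a, a ≠ h → v a = x * ∑ b, M a b * v b := by
      intro a ha
      have := congrFun hv a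
      simp only [mulVec, updateRow_ne ha] at this
      change ((1 - x • M) *ᵥ v) a = 0 at this
      rw [sub_mulVec, one_mulVec, smul_mulVec] at this
      simp only [Pi.sub_apply, Pi.smul_apply, smul_eq_mul, mulVec, dotProduct] at this
      linarith
    obtain ⟨a, ha⟩ := Finite.exists_max fun b => |v b|
    have key : |v h| = |v a| := by
      refine propagate_max (f := fun b => |v b|) hM0 hM1 ha ?_ (hirr a h) rfl
      intro b hb
      by_cases hbh : b = h
      · subst hbh
        simp only [hvh, abs_zero]
        exact Finset.sum_nonneg fun c _ => mul_nonneg (hM0 _ _) (abs_nonneg _)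
      · rw [hva b hbh, abs_mul, abs_of_nonneg hx.1]
        calc x * |∑ c, M b c * v c| ≤ 1 * |∑ c, M b c * v c| := by gcongr; exact hx.2
          _ = |∑ c, M b c * v c| := one_mul _
          _ ≤ ∑ c, |M b c * v c| := Finset.abs_sum_le_sum_abs _ _
          _ = _ := by simp_rw [abs_mul, abs_of_nonneg (hM0 b _)]
    apply hv0
    ext b
    have := ha b
    rw [← key, hvh, abs_zero] at this
    simpa using abs_nonpos_iff.1 this
  have hfin : 0 < D 1 := by
    by_contra hc
    push Not at hc
    obtain ⟨x, hx, hx0⟩ := intermediate_value_Icc' zero_le_one hcont.continuousOn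
      (show (0:ℝ) ∈ Set.Icc (D 1) (D 0) from ⟨hc, by rw [hD0]; exact zero_le_one⟩)
    exact hne x hx hx0
  simpa [hD] using hfin

lemma det_one_sub_eq_zero [Nonempty ι] (hM1 : ∀ a, ∑ b, M a b = 1) : (1 - M).det = 0 := by
  refine exists_mulVec_eq_zero_iff.1 ⟨fun _ => 1, ?_, ?_⟩
  · intro h
    simpa using congrFun h (Classical.arbitrary ι)
  · ext a
    rw [sub_mulVec, one_mulVec]
    simp [mulVec, dotProduct, hM1]

lemma adjugate_rows (hM0 : ∀ a b, 0 ≤ M a b) (hM1 : ∀ a, ∑ b, M a b = 1)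
    (hirr : ∀ a b, Relation.TransGen (fun a b => 0 < M a b) a b) (a b c : ι) :
    (1 - M).adjugate a c = (1 - M).adjugate b c := by
  have : Nonempty ι := ⟨a⟩
  have h1 : (1 - M) * (1 - M).adjugate = 0 := by
    rw [mul_adjugate, det_one_sub_eq_zero hM1, zero_smul]
  refine harmonic_const hM0 hM1 hirr (v := fun a => (1 - M).adjugate a c) ?_ a b
  ext d
  have := congrFun (congrFun h1 d) c
  rw [Matrix.sub_mul, one_mul] at this
  simp only [Matrix.sub_apply, Matrix.mul_apply, Matrix.zero_apply] at this
  simp only [mulVec, dotProduct]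
  linarith

lemma adjugate_stationary (hM1 : ∀ a, ∑ b, M a b = 1) (a c : ι) :
    ∑ b, (1 - M).adjugate a b * M b c = (1 - M).adjugate a c := by
  have : Nonempty ι := ⟨a⟩
  have h1 : (1 - M).adjugate * (1 - M) = 0 := by
    rw [adjugate_mul, det_one_sub_eq_zero hM1, zero_smul]
  have := congrFun (congrFun h1 a) c
  rw [Matrix.mul_sub, mul_one] at this
  simp only [Matrix.sub_apply, Matrix.mul_apply, Matrix.zero_apply] at this
  linarith

end Stochastic

section Geometry

/-! ### Volumes of tiles and one step of a Kakutani sequence -/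

variable {d n : ℕ}

lemma volume_image_isometry (φ : Euc d ≃ᵢ Euc d) (A : Set (Euc d)) :
    volume (φ '' A) = volume A := by
  have h1 : φ '' A = (fun x => φ 0 + x) '' (φ.toRealLinearIsometryEquiv '' A) := by
    rw [Set.image_image]
    refine Set.image_congr fun x _ => ?_
    simp
  have h2 : volume (φ.toRealLinearIsometryEquiv '' A) = volume A := by
    have := φ.toRealLinearIsometryEquiv.symm.measurePreserving.measure_preimage_equiv
      (f := φ.toRealLinearIsometryEquiv.symm.toHomeomorph.toMeasurableEquiv) A
    rw [← this]
    congr 1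
    exact φ.toRealLinearIsometryEquiv.toEquiv.image_eq_preimage_symm A
  rw [h1, ← h2]
  simp [Set.image_add_left]

/-- The similarity `x ↦ φ (a • x)`. -/
noncomputable def simHomeo (a : ℝ) (ha : a ≠ 0) (φ : Euc d ≃ᵢ Euc d) : Euc d ≃ₜ Euc d :=
  (Homeomorph.smulOfNeZero a ha).trans φ.toHomeomorph

lemma simHomeo_image (a : ℝ) (ha : a ≠ 0) (φ : Euc d ≃ᵢ Euc d) (A : Set (Euc d)) :
    simHomeo a ha φ '' A = φ '' (a • A) := by
  rw [← Set.image_smul, Set.image_image]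
  rfl

lemma volume_sim {a : ℝ} (ha : 0 < a) (φ : Euc d ≃ᵢ Euc d) (A : Set (Euc d)) :
    volume (φ '' (a • A)) = ENNReal.ofReal (a ^ d) * volume A := by
  rw [volume_image_isometry, Measure.addHaar_smul]
  simp [abs_of_pos ha]

/-- Sets of positive finite volume with null boundary. -/
def GoodSet (A : Set (Euc d)) : Prop :=
  0 < volume A ∧ volume A < ⊤ ∧ volume (frontier A) = 0

lemma GoodSet.sim {A : Set (Euc d)} (hA : GoodSet A) {a : ℝ} (ha : 0 < a) (φ : Euc d ≃ᵢ Euc d) :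
    GoodSet (φ '' (a • A)) := by
  have hp : ENNReal.ofReal (a ^ d) ≠ 0 := by
    simpa using pow_pos ha d
  refine ⟨?_, ?_, ?_⟩
  · rw [volume_sim ha]; exact ENNReal.mul_pos hp hA.1.ne'
  · rw [volume_sim ha]; exact ENNReal.mul_lt_top ENNReal.ofReal_lt_top hA.2.1
  · rw [← simHomeo_image a ha.ne', ← Homeomorph.image_frontier, simHomeo_image, volume_sim ha,
      hA.2.2, mul_zero]

lemma GoodSet.interior_nonempty {A : Set (Euc d)} (hA : GoodSet A) : (interior A).Nonempty := by
  rw [Set.nonempty_iff_ne_empty]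
  intro h
  have := measure_interior_of_null_frontier hA.2.2
  rw [h, measure_empty] at this
  exact hA.1.ne this

/-- Since tiles have nonempty interior, collections with disjoint interiors have no repeated
tiles. -/
lemma GoodSet.not_disjoint {A B C : Set (Euc d)} (hA : GoodSet A) (hB : A ⊆ B) (hC : A ⊆ C) :
    ¬ Disjoint (interior B) (interior C) := by
  intro h
  obtain ⟨x, hx⟩ := hA.interior_nonempty
  exact Set.disjoint_left.1 h (interior_mono hB hx) (interior_mono hC hx)

lemma IsTile.good {A : Set (Euc d)} (hA : IsTile A) : GoodSet A :=
  ⟨hA.2.2.1, hA.1.measure_lt_top, hA.2.2.2⟩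

/-- The edges leaving the vertex `i` of the graph of the scheme: its substitution tiles. -/
abbrev Edge (σ : MSScheme d n) (i : Fin n) : Type := Σ j : Fin n, Fin (σ.numSub i j)

/-- The type of the substitution tile. -/
abbrev etgt (σ : MSScheme d n) (i : Fin n) (e : Edge σ i) : Fin n := e.1

/-- The length of an edge: minus the logarithm of the relative volume. -/
noncomputable def elen (σ : MSScheme d n) (i : Fin n) (e : Edge σ i) : ℝ :=
  -Real.log (σ.beta i e.1 e.2 ^ d)

variable {σ : MSScheme d n}

lemma exp_neg_elen (i : Fin n) (e : Edge σ i) :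
    Real.exp (-elen σ i e) = σ.beta i e.1 e.2 ^ d := by
  rw [elen, neg_neg, Real.exp_log]
  exact pow_pos (σ.beta_pos i e.1 e.2) d

lemma dim_ne_zero (hinc : σ.Incommensurable) : d ≠ 0 := by
  rintro rfl
  obtain ⟨i, j, a, b, ⟨m, _, p, _, _, e, ha⟩, _, hab⟩ := hinc
  apply hab 0
  simp [ha]

lemma elen_pos (hd : d ≠ 0) (i : Fin n) (e : Edge σ i) : 0 < elen σ i e := by
  rw [elen, neg_pos]
  have h0 := σ.beta_pos i e.1 e.2
  have h1 := σ.beta_lt_one i e.1 e.2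
  exact Real.log_neg (pow_pos h0 d) (pow_lt_one₀ h0.le h1 hd)

lemma beta_eq_scale (hnorm : ∀ j : Fin n, volume (σ.T j) = 1) (i j : Fin n)
    (k : Fin (σ.numSub i j)) : σ.beta i j k = σ.scale i j k := by
  simp [MSScheme.beta, hnorm]

lemma rule_volume (hnorm : ∀ j : Fin n, volume (σ.T j) = 1) {ϱ} (hϱ : ϱ ∈ σ.rules) (i : Fin n)
    (e : Edge σ i) : volume (ϱ i e.1 e.2) = ENNReal.ofReal (σ.beta i e.1 e.2 ^ d) := by
  obtain ⟨φ, hφ⟩ := σ.rules_iso ϱ hϱ i e.1 e.2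
  rw [hφ, volume_sim (σ.scale_pos _ _ _), hnorm, mul_one, beta_eq_scale hnorm]

lemma rule_good {ϱ} (hϱ : ϱ ∈ σ.rules) (i : Fin n)
    (e : Edge σ i) : GoodSet (ϱ i e.1 e.2) := by
  obtain ⟨φ, hφ⟩ := σ.rules_iso ϱ hϱ i e.1 e.2
  rw [hφ]
  exact (σ.tile e.1).good.sim (σ.scale_pos _ _ _) φ

/-- The relative volumes of the substitution tiles of each prototile add up to `1`. -/
lemma sum_exp_neg_elen (hnorm : ∀ j : Fin n, volume (σ.T j) = 1) (i : Fin n) :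
    ∑ e, Real.exp (-elen σ i e) = 1 := by
  obtain ⟨ϱ, hϱ⟩ := σ.rules_nonempty
  have h1 : ∑ e : Edge σ i, volume (ϱ i e.1 e.2) = 1 := by
    apply le_antisymm
    · calc ∑ e : Edge σ i, volume (ϱ i e.1 e.2)
          = ∑ e : Edge σ i, volume (interior (ϱ i e.1 e.2)) :=
            Finset.sum_congr rfl fun e _ =>
              (measure_interior_of_null_frontier (rule_good hϱ i e).2.2).symm
        _ = volume (⋃ e ∈ (Finset.univ : Finset (Edge σ i)), interior (ϱ i e.1 e.2)) := by
            rw [measure_biUnion_finset]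
            · intro p _ q _ hpq
              exact σ.rules_disjoint ϱ hϱ i p q hpq
            · exact fun e _ => isOpen_interior.measurableSet
        _ ≤ volume (σ.T i) := by
            apply measure_mono
            refine Set.iUnion₂_subset fun e _ => ?_
            rw [← σ.rules_cover ϱ hϱ i]
            exact interior_subset.trans
              (Set.subset_iUnion (fun p : Edge σ i => ϱ i p.1 p.2) e)
        _ = 1 := hnorm i
    · rw [← hnorm i, ← σ.rules_cover ϱ hϱ i]
      exact measure_iUnion_fintype_le _ _
  simp_rw [rule_volume hnorm hϱ] at h1
  rw [← ENNReal.ofReal_sum_of_nonneg] at h1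
  · rw [ENNReal.ofReal_eq_one] at h1
    simpa only [exp_neg_elen] using h1
  · exact fun e _ => (pow_pos (σ.beta_pos i e.1 e.2) d).le

/-- The pieces of a substituted tile, indexed by the edges of the graph. Only volumes, types and
disjointness of interiors matter later; neither the rule nor the similarity does. -/
lemma SubstitutesTo.exists_children (hnorm : ∀ j : Fin n, volume (σ.T j) = 1) {S : LTile d n}
    {P : Finset (LTile d n)} (h : SubstitutesTo σ S P) :
    ∃ c : Edge σ S.type → LTile d n, P = Finset.univ.image c ∧ (∀ e, (c e).type = e.1) ∧
      (∀ e, volume (c e).carrier = volume S.carrier * ENNReal.ofReal (σ.beta S.type e.1 e.2 ^ d)) ∧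
      (∀ e, GoodSet (c e).carrier) ∧ (∀ e, (c e).carrier ⊆ S.carrier) ∧
      (∀ e e', e ≠ e' → Disjoint (interior (c e).carrier) (interior (c e').carrier)) := by
  obtain ⟨ϱ, hϱ, a, ha, φ, hS, hP⟩ := h
  refine ⟨_, hP, fun e => rfl, fun e => ?_, fun e => ?_, fun e => ?_, fun e e' hne => ?_⟩
  · simp only
    rw [hS, volume_sim ha, volume_sim ha, hnorm, mul_one, rule_volume hnorm hϱ]
  · exact (rule_good hϱ _ e).sim ha φ
  · simp only
    rw [hS, ← σ.rules_cover ϱ hϱ S.type]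
    exact Set.image_mono (Set.smul_set_mono
      (Set.subset_iUnion (fun p : Edge σ S.type => ϱ S.type p.1 p.2) e))
  · simp only
    rw [← simHomeo_image a ha.ne', ← simHomeo_image a ha.ne', ← Homeomorph.image_interior,
      ← Homeomorph.image_interior, Set.disjoint_image_iff (simHomeo a ha.ne' φ).injective]
    exact σ.rules_disjoint ϱ hϱ S.type e e' hne

/-- The volume of a labeled tile, as a real number. -/
noncomputable def vr (S : LTile d n) : ℝ := (volume S.carrier).toReal

/-- The maximal volume of a tile in a collection, as a real number. -/
noncomputable def maxVol (P : Finset (LTile d n)) : ℝ := (P.sup fun S => volume S.carrier).toReal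

/-- The properties kept by every step of a Kakutani sequence: a nonempty finite collection of sets
of positive finite volume and null boundary, with pairwise disjoint interiors. -/
structure Packing (P : Finset (LTile d n)) : Prop where
  nonempty : P.Nonempty
  good : ∀ S ∈ P, GoodSet S.carrier
  disj : ∀ S ∈ P, ∀ S' ∈ P, S ≠ S' → Disjoint (interior S.carrier) (interior S'.carrier)

lemma GoodSet.vr_pos {S : LTile d n} (h : GoodSet S.carrier) : 0 < vr S :=
  ENNReal.toReal_pos h.1.ne' h.2.1.ne

namespace Packing

variable {P : Finset (LTile d n)}

lemma sup_lt_top (hP : Packing P) : (P.sup fun S => volume S.carrier) < ⊤ :=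
  (Finset.sup_lt_iff (by simp)).2 fun S hS => (hP.good S hS).2.1

lemma vr_le (hP : Packing P) {S : LTile d n} (hS : S ∈ P) : vr S ≤ maxVol P :=
  ENNReal.toReal_mono hP.sup_lt_top.ne (Finset.le_sup (f := fun S => volume S.carrier) hS)

lemma exists_vr_eq (hP : Packing P) : ∃ S ∈ P, vr S = maxVol P := by
  obtain ⟨S, hS, h⟩ := Finset.exists_mem_eq_sup P hP.nonempty fun S => volume S.carrier
  exact ⟨S, hS, by rw [vr, maxVol, h]⟩

lemma mem_maxTiles (hP : Packing P) {S : LTile d n} :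
    S ∈ maxTiles P ↔ S ∈ P ∧ vr S = maxVol P := by
  rw [maxTiles, Finset.mem_filter]
  refine and_congr_right fun hS => ⟨fun h => ?_, fun h S' hS' => ?_⟩
  · refine le_antisymm (hP.vr_le hS) ?_
    exact ENNReal.toReal_mono (hP.good S hS).2.1.ne (Finset.sup_le h)
  · rw [← ENNReal.toReal_le_toReal (hP.good S' hS').2.1.ne (hP.good S hS).2.1.ne]
    exact (hP.vr_le hS').trans h.ge

lemma maxVol_pos (hP : Packing P) : 0 < maxVol P := by
  obtain ⟨S, hS, h⟩ := hP.exists_vr_eq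
  rw [← h]; exact (hP.good S hS).vr_pos

/-- One step of a Kakutani sequence keeps `Packing`, strictly decreases the maximal volume, and
replaces, in sums over tiles of a function of type and volume, each maximal tile by its pieces. -/
lemma step (hnorm : ∀ j : Fin n, volume (σ.T j) = 1) (hd : d ≠ 0) (hP : Packing P)
    {repl : LTile d n → Finset (LTile d n)} {P' : Finset (LTile d n)}
    (hrepl : ∀ S ∈ maxTiles P, SubstitutesTo σ S (repl S))
    (hP' : P' = (P \ maxTiles P) ∪ (maxTiles P).biUnion repl) :
    Packing P' ∧ maxVol P' < maxVol P ∧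
    ∀ f : Fin n → ℝ → ℝ, ∑ S ∈ P', f S.type (vr S) =
      ∑ S ∈ P \ maxTiles P, f S.type (vr S) +
      ∑ S ∈ maxTiles P, ∑ e : Edge σ S.type, f e.1 (vr S * Real.exp (-elen σ S.type e)) := by
  classical
  have hch := fun S (hS : S ∈ maxTiles P) => (hrepl S hS).exists_children hnorm
  choose! c hc htype hvol hgood hsub hdisj using hch
  have hmaxP : ∀ S ∈ maxTiles P, S ∈ P := fun S hS => (hP.mem_maxTiles.1 hS).1
  have hinj : ∀ S ∈ maxTiles P, Function.Injective (c S) := by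
    intro S hS e e' h
    by_contra hne
    have := hdisj S hS e e' hne
    rw [← h] at this
    exact (hgood S hS e).not_disjoint subset_rfl subset_rfl this
  have hvr : ∀ S ∈ maxTiles P, ∀ e, vr (c S e) = vr S * Real.exp (-elen σ S.type e) := by
    intro S hS e
    rw [vr, hvol S hS, ENNReal.toReal_mul, exp_neg_elen, ENNReal.toReal_ofReal, vr]
    exact (pow_pos (σ.beta_pos S.type e.1 e.2) d).le
  have hmem : ∀ S ∈ maxTiles P, ∀ T, T ∈ repl S ↔ ∃ e, c S e = T := by
    intro S hS T
    rw [hc S hS]; simp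
  -- every tile of `P'` sits in a tile of `P`
  have hpar : ∀ S ∈ P', ∃ T ∈ P, S.carrier ⊆ T.carrier ∧ GoodSet S.carrier ∧
      ((T ∉ maxTiles P ∧ S = T) ∨ (T ∈ maxTiles P ∧ ∃ e, c T e = S)) := by
    intro S hS
    rw [hP', Finset.mem_union, Finset.mem_sdiff, Finset.mem_biUnion] at hS
    rcases hS with hS | ⟨T, hT, hST⟩
    · exact ⟨S, hS.1, subset_rfl, hP.good S hS.1, .inl ⟨hS.2, rfl⟩⟩
    · obtain ⟨e, rfl⟩ := (hmem T hT S).1 hST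
      exact ⟨T, hmaxP T hT, hsub T hT e, hgood T hT e, .inr ⟨hT, e, rfl⟩⟩
  have hpack : Packing P' := by
    refine ⟨?_, fun S hS => ?_, fun S hS S' hS' hne => ?_⟩
    · obtain ⟨S, hS, hm⟩ := hP.exists_vr_eq
      have hSm : S ∈ maxTiles P := hP.mem_maxTiles.2 ⟨hS, hm⟩
      have hcard := two_le_card (elen_pos (σ := σ) hd) (sum_exp_neg_elen hnorm) S.type
      have : 0 < Fintype.card (Edge σ S.type) := by
        have : (0:ℝ) < Fintype.card (Edge σ S.type) := by linarith
        exact_mod_cast this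
      obtain ⟨e⟩ := Fintype.card_pos_iff.1 this
      refine ⟨c S e, ?_⟩
      rw [hP', Finset.mem_union, Finset.mem_biUnion]
      exact .inr ⟨S, hSm, (hmem S hSm _).2 ⟨e, rfl⟩⟩
    · obtain ⟨T, _, _, hg, _⟩ := hpar S hS
      exact hg
    · obtain ⟨T, hT, hsT, _, h1⟩ := hpar S hS
      obtain ⟨T', hT', hsT', _, h2⟩ := hpar S' hS'
      by_cases hTT : T = T'
      · subst hTT
        rcases h1 with ⟨h1, rfl⟩ | ⟨h1, e, rfl⟩
        · rcases h2 with ⟨_, rfl⟩ | ⟨h2, _⟩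
          · exact (hne rfl).elim
          · exact (h1 h2).elim
        · rcases h2 with ⟨h2, _⟩ | ⟨_, e', rfl⟩
          · exact (h2 h1).elim
          · exact hdisj T h1 e e' fun h => hne (by rw [h])
      · exact (hP.disj T hT T' hT' hTT).mono (interior_mono hsT) (interior_mono hsT')
  refine ⟨hpack, ?_, fun f => ?_⟩
  · obtain ⟨S, hS, hm⟩ := hpack.exists_vr_eq
    rw [← hm]
    obtain ⟨T, hT, _, _, h1⟩ := hpar S hS
    rcases h1 with ⟨h1, rfl⟩ | ⟨h1, e, rfl⟩
    · refine lt_of_le_of_ne (hP.vr_le hT) fun h => h1 (hP.mem_maxTiles.2 ⟨hT, h⟩)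
    · rw [hvr T h1, ← (hP.mem_maxTiles.1 h1).2]
      refine mul_lt_of_lt_one_right (hP.good T hT).vr_pos ?_
      rw [Real.exp_lt_one_iff]
      linarith [elen_pos (σ := σ) hd T.type e]
  · have hd1 : Disjoint (P \ maxTiles P) ((maxTiles P).biUnion repl) := by
      rw [Finset.disjoint_left]
      intro S hS hS'
      rw [Finset.mem_sdiff] at hS
      rw [Finset.mem_biUnion] at hS'
      obtain ⟨T, hT, hST⟩ := hS'
      obtain ⟨e, rfl⟩ := (hmem T hT S).1 hST
      refine (hgood T hT e).not_disjoint subset_rfl (hsub T hT e)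
        (hP.disj _ hS.1 T (hmaxP T hT) fun h => hS.2 ?_)
      rw [h]; exact hT
    have hd2 : ((maxTiles P : Finset (LTile d n)) : Set (LTile d n)).PairwiseDisjoint repl := by
      intro T hT T' hT' hne
      rw [Function.onFun, Finset.disjoint_left]
      intro S hS hS'
      obtain ⟨e, rfl⟩ := (hmem T hT S).1 hS
      obtain ⟨e', he'⟩ := (hmem T' hT' _).1 hS'
      refine (hgood T hT e).not_disjoint (hsub T hT e) ?_
        (hP.disj T (hmaxP T hT) T' (hmaxP T' hT') hne)
      rw [← he']
      exact hsub T' hT' e'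
    rw [hP', Finset.sum_union hd1, Finset.sum_biUnion hd2]
    congr 1
    refine Finset.sum_congr rfl fun S hS => ?_
    rw [hc S hS, Finset.sum_image (fun _ _ _ _ h => hinj S hS h)]
    refine Finset.sum_congr rfl fun e _ => ?_
    rw [htype S hS, hvr S hS]

end Packing

end Geometry

section Scheme

/-! ### The graph of a scheme -/

variable {d n : ℕ} {σ : MSScheme d n}

lemma exists_pathLen (hirr : σ.Irreducible) (i j : Fin n) :
    ∃ s, PathLen (etgt σ) (elen σ) i j s := by
  have := hirr i j
  induction this with
  | single h => exact ⟨_, .cons i ⟨_, ⟨0, h⟩⟩ (.nil _)⟩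
  | tail _ h ih =>
    obtain ⟨s, hs⟩ := ih
    exact ⟨_, hs.trans (.cons _ ⟨_, ⟨0, h⟩⟩ (.nil _))⟩

lemma pathLen_of_walk (m : ℕ) (p : Fin (m + 1) → Fin n)
    (e : (t : Fin m) → Fin (σ.numSub (p t.castSucc) (p t.succ))) :
    PathLen (etgt σ) (elen σ) (p 0) (p (Fin.last m))
      (∑ t : Fin m, elen σ (p t.castSucc) ⟨p t.succ, e t⟩) := by
  induction m with
  | zero => simpa using PathLen.nil _
  | succ m ih =>
    rw [Fin.sum_univ_succ]
    have h1 : PathLen (etgt σ) (elen σ) (p (Fin.succ 0)) (p (Fin.last (m + 1)))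
        (∑ t : Fin m, elen σ (p t.succ.castSucc) ⟨p t.succ.succ, e t.succ⟩) :=
      ih (fun t => p t.succ) fun t => e t.succ
    have h2 := PathLen.cons (tgt := etgt σ) (len := elen σ) (p (Fin.castSucc 0))
      (⟨p (Fin.succ 0), e 0⟩ : Edge σ (p (Fin.castSucc 0))) h1
    exact h2

lemma MSScheme.IsClosedPathLogVol.pathLen (hd : d ≠ 0) {i : Fin n} {a : ℝ}
    (h : σ.IsClosedPathLogVol i a) : PathLen (etgt σ) (elen σ) i i (-a) ∧ 0 < -a := by
  obtain ⟨m, hm, p, h0, hl, e, ha⟩ := h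
  have hsum : -a = ∑ t : Fin m, elen σ (p t.castSucc) ⟨p t.succ, e t⟩ := by
    rw [ha, ← Finset.sum_neg_distrib]; rfl
  refine ⟨?_, ?_⟩
  · have := pathLen_of_walk m p e
    rwa [h0, hl, ← hsum] at this
  · rw [hsum]
    exact Finset.sum_pos (fun t _ => elen_pos hd _ _) ⟨⟨0, hm⟩, Finset.mem_univ _⟩

/-- Path lengths between any two vertices are eventually `ε`-dense: a path can be routed through
the two incommensurable loops, each run through arbitrarily often. -/
lemma pathLen_dense (hirr : σ.Irreducible) (hinc : σ.Incommensurable) :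
    ∀ ε > 0, ∀ i h, ∀ᶠ x in atTop, ∃ s, x ≤ s ∧ s ≤ x + ε ∧ PathLen (etgt σ) (elen σ) i h s := by
  have hd := dim_ne_zero hinc
  obtain ⟨i', j', a, b, ha, hb, hab⟩ := hinc
  obtain ⟨hpa, -⟩ := ha.pathLen hd
  obtain ⟨hpb, hb0⟩ := hb.pathLen hd
  have hirrat : Irrational (-a / -b) := by
    rintro ⟨q, hq⟩
    refine hab q ?_
    have : b ≠ 0 := by rintro rfl; simp at hb0
    rw [hq]; field_simp
  intro ε hε i h
  obtain ⟨u, hu⟩ := exists_pathLen hirr i i'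
  obtain ⟨v, hv⟩ := exists_pathLen hirr i' j'
  obtain ⟨w, hw⟩ := exists_pathLen hirr j' h
  have := (tendsto_atTop_add_const_right atTop (-(u + v + w)) tendsto_id).eventually
    (eventually_dense hb0 hirrat hε)
  filter_upwards [this] with x hx
  obtain ⟨m, k, h1, h2⟩ := hx
  simp only [id] at h1 h2
  refine ⟨_, ?_, ?_, ((hu.trans (hpa.nsmul m)).trans hv).trans ((hpb.nsmul k).trans hw)⟩ <;>
    linarith

lemma Mmat_sum_mul (f : Fin n → ℝ) (a : Fin n) :
    ∑ b, Mmat σ a b * f b = ∑ e, Real.exp (-elen σ a e) * f (etgt σ a e) := by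
  rw [Fintype.sum_sigma]
  refine Finset.sum_congr rfl fun b _ => ?_
  simp only [exp_neg_elen, etgt]
  rw [← Finset.sum_mul]
  rfl

lemma Mmat_nonneg (a b : Fin n) : 0 ≤ Mmat σ a b := by
  simp only [Mmat, Matrix.of_apply]
  exact Finset.sum_nonneg fun k _ => (pow_pos (σ.beta_pos a b k) d).le

lemma Mmat_row_sum (hnorm : ∀ j : Fin n, volume (σ.T j) = 1) (a : Fin n) :
    ∑ b, Mmat σ a b = 1 := by
  rw [← sum_exp_neg_elen hnorm a]
  simpa using Mmat_sum_mul (σ := σ) (fun _ => 1) a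

lemma Mmat_irreducible (hirr : σ.Irreducible) (a b : Fin n) :
    Relation.TransGen (fun a b => 0 < Mmat σ a b) a b := by
  refine Relation.TransGen.mono (fun a b h => ?_) a b (hirr a b)
  simp only [Mmat, Matrix.of_apply]
  exact Finset.sum_pos (fun k _ => pow_pos (σ.beta_pos a b k) d) ⟨⟨0, h⟩, Finset.mem_univ _⟩

lemma M'mat_row_sum (a : Fin n) :
    ∑ e, Real.exp (-elen σ a e) * elen σ a e = -(d * ∑ b, M'mat σ a b) := by
  rw [Fintype.sum_sigma, Finset.mul_sum, ← Finset.sum_neg_distrib]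
  refine Finset.sum_congr rfl fun b _ => ?_
  simp only [exp_neg_elen, M'mat, Matrix.of_apply]
  simp only [elen, Real.log_pow]
  rw [Finset.mul_sum, ← Finset.sum_neg_distrib]
  exact Finset.sum_congr rfl fun k _ => by ring

variable (σ) in
/-- The number of tiles of type `j` that remain when, starting from a tile of type `i` and volume
`1`, all tiles of volume greater than `exp (-t)` are substituted. Such a tile is the starting tile
(if `t ≤ 0`), or it comes from an edge `h → j` whose initial tile, of type `h`, has volume
`exp (-s)` with `t - elen ≤ s < t`; here `A h i` counts the paths from `i` to `h`. -/
noncomputable def leafCount (A : Fin n → Fin n → ℝ → ℝ) (j i : Fin n) (t : ℝ) : ℝ :=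
  (if i = j ∧ t ≤ 0 then 1 else 0) +
    ∑ h, ∑ k : Fin (σ.numSub h j), (A h i t - A h i (t - elen σ h ⟨j, k⟩))

lemma leafCount_of_nonpos (hd : d ≠ 0) {A : Fin n → Fin n → ℝ → ℝ}
    (hA : ∀ h, IsCounting (etgt σ) (elen σ) h (A h)) (j i : Fin n) {t : ℝ} (ht : t ≤ 0) :
    leafCount σ A j i t = if i = j then 1 else 0 := by
  rw [leafCount, Finset.sum_eq_zero]
  · simp [ht]
  · intro h _
    refine Finset.sum_eq_zero fun k _ => ?_
    have := elen_pos (σ := σ) hd h ⟨j, k⟩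
    rw [(hA h).zero _ _ ht, (hA h).zero _ _ (by linarith), sub_zero]

lemma leafCount_step (hd : d ≠ 0) {A : Fin n → Fin n → ℝ → ℝ}
    (hA : ∀ h, IsCounting (etgt σ) (elen σ) h (A h)) (j i : Fin n) {t : ℝ} (ht : 0 < t) :
    leafCount σ A j i t = ∑ e : Edge σ i, leafCount σ A j e.1 (t - elen σ i e) := by
  have hpos := elen_pos (σ := σ) hd
  have h1 : ∀ h, ∀ k : Fin (σ.numSub h j), A h i t - A h i (t - elen σ h ⟨j, k⟩) =
      (if i = h then (if t - elen σ h ⟨j, k⟩ ≤ 0 then 1 else 0) else 0) +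
      ∑ e : Edge σ i, (A h e.1 (t - elen σ i e)
        - A h e.1 (t - elen σ i e - elen σ h ⟨j, k⟩)) := by
    intro h k
    rw [(hA h).step' hpos i t, (hA h).step' hpos i (t - elen σ h ⟨j, k⟩), Finset.sum_sub_distrib]
    have h2 : ∑ e : Edge σ i, A h e.1 (t - elen σ h ⟨j, k⟩ - elen σ i e) =
        ∑ e : Edge σ i, A h e.1 (t - elen σ i e - elen σ h ⟨j, k⟩) :=
      Finset.sum_congr rfl fun e _ => by rw [sub_right_comm]
    simp only [etgt]
    rw [h2]
    by_cases hih : i = h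
    · by_cases h0 : t - elen σ h ⟨j, k⟩ ≤ 0
      · rw [if_pos ⟨hih, ht⟩, if_neg (fun h => h0.not_gt h.2), if_pos hih, if_pos h0]; ring
      · rw [if_pos ⟨hih, ht⟩, if_pos ⟨hih, not_le.1 h0⟩, if_pos hih, if_neg h0]; ring
    · rw [if_neg (fun h => hih h.1), if_neg (fun h => hih h.1), if_neg hih]; ring
  have h3 : ∑ h, ∑ k : Fin (σ.numSub h j),
      (if i = h then (if t - elen σ h ⟨j, k⟩ ≤ 0 then (1:ℝ) else 0) else 0) =
      ∑ e : Edge σ i, if e.1 = j ∧ t - elen σ i e ≤ 0 then 1 else 0 := by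
    rw [Finset.sum_eq_single i, Fintype.sum_sigma, Finset.sum_eq_single j]
    · simp
    · intro b _ hb
      simp [hb]
    · simp
    · intro b _ hb
      simp [hb.symm]
    · simp
  unfold leafCount
  rw [if_neg (fun h => ht.not_ge h.2), zero_add]
  simp_rw [h1, Finset.sum_add_distrib]
  rw [h3]
  congr 1
  rw [Finset.sum_comm' (t' := Finset.univ) (s' := fun _ => Finset.univ) (by simp)]
  refine Finset.sum_congr rfl fun h _ => ?_
  rw [Finset.sum_comm]

end Scheme

section Kakutani

/-! ### Kakutani sequences -/

variable {d n : ℕ} {σ : MSScheme d n} {i : Fin n} {π : ℕ → Finset (LTile d n)}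

lemma IsKakutaniSeq.packing (hnorm : ∀ j : Fin n, volume (σ.T j) = 1) (hd : d ≠ 0)
    (hπ : IsKakutaniSeq σ i π) (m : ℕ) : Packing (π m) := by
  induction m with
  | zero =>
    rw [hπ.1]
    refine ⟨by simp, ?_, ?_⟩
    · intro S hS
      rw [Finset.mem_singleton] at hS
      subst hS
      exact (σ.tile i).good
    · intro S hS S' hS' hne
      rw [Finset.mem_singleton] at hS hS'
      exact (hne (hS.trans hS'.symm)).elim
  | succ m ih =>
    obtain ⟨repl, h1, h2⟩ := hπ.2 m
    exact (ih.step hnorm hd h1 h2).1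

lemma IsKakutaniSeq.strictAnti (hnorm : ∀ j : Fin n, volume (σ.T j) = 1) (hd : d ≠ 0)
    (hπ : IsKakutaniSeq σ i π) : StrictAnti fun m => maxVol (π m) := by
  refine strictAnti_nat_of_succ_lt fun m => ?_
  obtain ⟨repl, h1, h2⟩ := hπ.2 m
  exact ((hπ.packing hnorm hd m).step hnorm hd h1 h2).2.1

lemma IsKakutaniSeq.card_ge (hnorm : ∀ j : Fin n, volume (σ.T j) = 1) (hd : d ≠ 0)
    (hπ : IsKakutaniSeq σ i π) (m : ℕ) : (m : ℝ) ≤ (π m).card := by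
  induction m with
  | zero => simp
  | succ m ih =>
    obtain ⟨repl, h1, h2⟩ := hπ.2 m
    have hP := hπ.packing hnorm hd m
    have h3 := (hP.step hnorm hd h1 h2).2.2 fun _ _ => 1
    simp only [Finset.sum_const, nsmul_eq_mul, mul_one, Finset.card_univ] at h3
    have hsub : maxTiles (π m) ⊆ π m := fun S hS => (hP.mem_maxTiles.1 hS).1
    have hne : (1 : ℝ) ≤ (maxTiles (π m)).card := by
      obtain ⟨S, hS, hm⟩ := hP.exists_vr_eq
      exact_mod_cast Finset.card_pos.2 ⟨S, hP.mem_maxTiles.2 ⟨hS, hm⟩⟩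
    have h4 : ((maxTiles (π m)).card : ℝ) * 2 ≤
        ∑ S ∈ maxTiles (π m), (Fintype.card (Edge σ S.type) : ℝ) := by
      rw [← nsmul_eq_mul]
      exact Finset.card_nsmul_le_sum _ _ _ fun S _ =>
        two_le_card (elen_pos (σ := σ) hd) (sum_exp_neg_elen hnorm) S.type
    have h5 : ((π m \ maxTiles (π m)).card : ℝ) + (maxTiles (π m)).card = (π m).card := by
      exact_mod_cast Finset.card_sdiff_add_card_eq_card hsub
    push_cast
    linarith

/-- A solution `F` of the homogeneous renewal equation is conserved by substitution, as long as the
substituted tiles have volume greater than `exp (-t)`. -/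
lemma IsKakutaniSeq.conserve (hnorm : ∀ j : Fin n, volume (σ.T j) = 1) (hd : d ≠ 0)
    (hπ : IsKakutaniSeq σ i π) {F : Fin n → ℝ → ℝ}
    (hF : ∀ i t, 0 < t → F i t = ∑ e : Edge σ i, F e.1 (t - elen σ i e)) (t : ℝ) (m : ℕ)
    (hm : ∀ k < m, 0 < t + Real.log (maxVol (π k))) :
    ∑ S ∈ π m, F S.type (t + Real.log (vr S)) = F i t := by
  induction m with
  | zero =>
    rw [hπ.1]
    simp [vr, hnorm]
  | succ m ih =>
    rw [← ih fun k hk => hm k (by omega)]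
    obtain ⟨repl, h1, h2⟩ := hπ.2 m
    have hP := hπ.packing hnorm hd m
    have hsub : maxTiles (π m) ⊆ π m := fun S hS => (hP.mem_maxTiles.1 hS).1
    rw [(hP.step hnorm hd h1 h2).2.2 fun j v => F j (t + Real.log v),
      ← Finset.sum_sdiff hsub]
    congr 1
    refine Finset.sum_congr rfl fun S hS => ?_
    have hS' := hP.mem_maxTiles.1 hS
    rw [hF S.type (t + Real.log (vr S)) (by rw [hS'.2]; exact hm m (by omega))]
    refine Finset.sum_congr rfl fun e _ => ?_
    rw [Real.log_mul (hP.good S hS'.1).vr_pos.ne' (Real.exp_pos _).ne', Real.log_exp]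
    congr 1; ring

/-- The `m`-th partition arises by substituting exactly the tiles of volume greater than its maximal
volume. -/
lemma IsKakutaniSeq.countType_eq (hnorm : ∀ j : Fin n, volume (σ.T j) = 1) (hd : d ≠ 0)
    (hπ : IsKakutaniSeq σ i π) {A : Fin n → Fin n → ℝ → ℝ}
    (hA : ∀ h, IsCounting (etgt σ) (elen σ) h (A h)) (j : Fin n) (m : ℕ) :
    (countType (π m) j : ℝ) = leafCount σ A j i (-Real.log (maxVol (π m))) := by
  have hP := hπ.packing hnorm hd m
  rw [← hπ.conserve hnorm hd (F := leafCount σ A j) (fun i t ht => leafCount_step hd hA j i ht) _ m]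
  · rw [countType, Finset.card_filter]
    push_cast
    refine Finset.sum_congr rfl fun S hS => ?_
    rw [leafCount_of_nonpos hd hA]
    have := Real.log_le_log (hP.good S hS).vr_pos (hP.vr_le hS)
    linarith
  · intro k hk
    have := Real.log_lt_log hP.maxVol_pos (hπ.strictAnti hnorm hd hk)
    linarith

/-- The maximal volumes tend to `0`: otherwise the number of tiles, which increases at every step,
would stay bounded. -/
lemma IsKakutaniSeq.tendsto (hnorm : ∀ j : Fin n, volume (σ.T j) = 1) (hd : d ≠ 0)
    (hπ : IsKakutaniSeq σ i π) :
    Tendsto (fun m => -Real.log (maxVol (π m))) atTop atTop := by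
  have hpos := elen_pos (σ := σ) hd
  choose A hA using fun h => exists_counting (tgt := etgt σ) hpos h
  refine tendsto_atTop_atTop_of_monotone ?_ ?_
  · intro m k hmk
    have := Real.log_le_log (hπ.packing hnorm hd k).maxVol_pos
      ((hπ.strictAnti hnorm hd).antitone hmk)
    simp only
    linarith
  · intro b
    by_contra hc
    push Not at hc
    set K : ℝ := ∑ j : Fin n, (1 + ∑ h, ∑ _k : Fin (σ.numSub h j), A h i b) with hK
    have hcard : ∀ m, ((π m).card : ℝ) ≤ K := by
      intro m
      have h1 : ((π m).card : ℝ) = ∑ j : Fin n, (countType (π m) j : ℝ) := by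
        exact_mod_cast Finset.card_eq_sum_card_fiberwise (t := Finset.univ)
          (f := fun S : LTile d n => S.type) (fun _ _ => by simp)
      rw [h1, hK]
      refine Finset.sum_le_sum fun j _ => ?_
      rw [hπ.countType_eq hnorm hd hA, leafCount]
      refine add_le_add (by split_ifs <;> norm_num) ?_
      refine Finset.sum_le_sum fun h _ => Finset.sum_le_sum fun k _ => ?_
      have h2 := (hA h).nonneg hpos i (-Real.log (maxVol (π m)) - elen σ h ⟨j, k⟩)
      have h3 := (hA h).mono hpos i (hc m).le
      linarith
    obtain ⟨m, hm⟩ := exists_nat_gt K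
    linarith [hcard m, hπ.card_ge hnorm hd m]

end Kakutani

/-- **Theorem 7.4.** Let `σ` be a normalized irreducible incommensurable multiscale
substitution scheme in `ℝ^d`, let `{π_m}` be a Kakutani sequence of partitions of
`T i`, and let `V_m` be the maximal volume of a tile in `π_m`. Then `Q_σ` has positive
entries and equal rows, and for every type `j`, the number of tiles of type `j` in
`π_m` multiplied by `V_m` converges to `Σ_h b_hj · q_h`, where
`b_hj = Σ_k (1 − (β_hj^(k))^d)/d`; the limit is independent of `i`. -/
theorem tile_count_asymptotics_normalized {d n : ℕ} (σ : MSScheme d n)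
    (hnorm : ∀ j : Fin n, volume (σ.T j) = 1)
    (hirr : σ.Irreducible) (hinc : σ.Incommensurable) (i : Fin n)
    (π : ℕ → Finset (LTile d n)) (hπ : IsKakutaniSeq σ i π) :
    (∀ a b : Fin n, 0 < Qmat σ a b) ∧
    (∀ a b c : Fin n, Qmat σ a c = Qmat σ b c) ∧
    ∀ j : Fin n,
      Tendsto (fun m => (countType (π m) j : ℝ) *
          ((π m).sup fun S => volume S.carrier).toReal) atTop
        (𝓝 (∑ h : Fin n,
          (∑ k : Fin (σ.numSub h j), (1 - σ.beta h j k ^ d) / (d : ℝ)) * Qmat σ i h)) := by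
  have hd := dim_ne_zero hinc
  have hd0 : (d : ℝ) ≠ 0 := by exact_mod_cast hd
  have hne : Nonempty (Fin n) := ⟨i⟩
  have hpos := elen_pos (σ := σ) hd
  have hsum := sum_exp_neg_elen hnorm
  have hM0 := Mmat_nonneg (σ := σ)
  have hM1 := Mmat_row_sum hnorm
  have hMi := Mmat_irreducible hirr
  set q : Fin n → ℝ := fun h => (1 - Mmat σ).adjugate i h with hq
  have hrow : ∀ a h, (1 - Mmat σ).adjugate a h = q h := fun a h =>
    adjugate_rows hM0 hM1 hMi a i h
  have hqpos : ∀ h, 0 < q h := fun h => by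
    rw [← hrow h h]; exact adjugate_diag_pos hM0 hM1 hMi h
  set τ : ℝ := -(Matrix.trace ((1 - Mmat σ).adjugate * M'mat σ)) with hτ
  have hmean : ∑ a, q a * ∑ e, Real.exp (-elen σ a e) * elen σ a e = d * τ := by
    simp_rw [M'mat_row_sum]
    rw [hτ, Matrix.trace]
    simp only [Matrix.diag_apply, Matrix.mul_apply, hrow]
    rw [Finset.sum_comm, mul_neg, Finset.mul_sum, ← Finset.sum_neg_distrib]
    refine Finset.sum_congr rfl fun a _ => ?_
    rw [← Finset.mul_sum]; ring
  have hτpos : 0 < τ := by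
    have h1 : 0 < ∑ a, q a * ∑ e, Real.exp (-elen σ a e) * elen σ a e := by
      refine Finset.sum_pos (fun a _ => mul_pos (hqpos a) (Finset.sum_pos
        (fun e _ => mul_pos (Real.exp_pos _) (hpos a e)) ?_)) Finset.univ_nonempty
      by_contra hc
      rw [Finset.not_nonempty_iff_eq_empty] at hc
      have := hsum a
      simp [hc] at this
    rw [hmean] at h1
    exact (pos_iff_pos_of_mul_pos h1).1 (by positivity)
  have hQ : ∀ a h, Qmat σ a h = τ⁻¹ * q h := fun a h => by
    simp only [Qmat, Matrix.smul_apply, smul_eq_mul, hrow, ← hτ]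
  refine ⟨fun a b => ?_, fun a b c => by rw [hQ, hQ], fun j => ?_⟩
  · rw [hQ]; exact mul_pos (inv_pos.2 hτpos) (hqpos b)
  choose A hA using fun h => exists_counting (tgt := etgt σ) hpos h
  choose c hc using fun h => (hA h).exists_limit hpos hsum (pathLen_dense hirr hinc)
  have hcval : ∀ h, c h = Qmat σ i h / d := by
    intro h
    have := (hA h).limit_mul hpos (hc h) q (fun f => by
      simp_rw [← Mmat_sum_mul, Finset.mul_sum]
      rw [Finset.sum_comm]
      refine Finset.sum_congr rfl fun b _ => ?_
      simp_rw [← mul_assoc]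
      rw [← Finset.sum_mul, adjugate_stationary hM1])
    rw [hmean] at this
    rw [hQ, ← this]
    field_simp
  have hlim : Tendsto (fun t => Real.exp (-t) * leafCount σ A j i t) atTop
      (𝓝 (∑ h, ∑ k : Fin (σ.numSub h j), (c h - Real.exp (-elen σ h ⟨j, k⟩) * c h))) := by
    have h1 : Tendsto (fun t => ∑ h, ∑ k : Fin (σ.numSub h j),
        (Real.exp (-t) * A h i t - Real.exp (-elen σ h ⟨j, k⟩) *
          (Real.exp (-(t - elen σ h ⟨j, k⟩)) * A h i (t - elen σ h ⟨j, k⟩)))) atTop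
        (𝓝 (∑ h, ∑ k : Fin (σ.numSub h j), (c h - Real.exp (-elen σ h ⟨j, k⟩) * c h))) := by
      refine tendsto_finsetSum _ fun h _ => tendsto_finsetSum _ fun k _ => ?_
      refine (hc h i).sub (Tendsto.const_mul _ ?_)
      exact (hc h i).comp (tendsto_atTop_add_const_right atTop _ tendsto_id)
    refine h1.congr' ?_
    filter_upwards [eventually_gt_atTop 0] with t ht
    rw [leafCount, if_neg (fun h => ht.not_ge h.2), zero_add]
    simp_rw [exp_step (len := elen σ), ← mul_sub, Finset.mul_sum]
  have hfin := hlim.comp (hπ.tendsto hnorm hd)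
  convert hfin using 1
  · ext m
    simp only [Function.comp]
    rw [← hπ.countType_eq hnorm hd hA, neg_neg, Real.exp_log (hπ.packing hnorm hd m).maxVol_pos,
      mul_comm]
    rfl
  · congr 1
    refine Finset.sum_congr rfl fun h _ => ?_
    rw [Finset.sum_mul]
    refine Finset.sum_congr rfl fun k _ => ?_
    rw [hcval, exp_neg_elen]
    ring
end

section
/- Let S be an n×n nonnegative real matrix which is primitive, i.e. some power of S has all entries strictly positive. Let μ > 0 and let v ∈ ℝ^n be a vector with strictly positive entries such that S·v = μ·v. Then for every fixed k_0 ∈ ℕ and all indices 1 ≤ i, j ≤ n, lim_{k→∞} (S^{k−k_0}·𝟙)_j / (S^k·𝟙)_i = μ^{−k_0}·v_j / v_i, where 𝟙 = (1,…,1)^T denotes the all-ones vector. -/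
/-!
Dividing by the eigenvector turns the problem into one about averages. Put
`r k a = (S ^ k 𝟙)_a / (μ ^ k v_a)` and `W l a b = (S ^ l)_{ab} v_b / (μ ^ l v_a)`. Since
`S ^ l v = μ ^ l v`, the kernels `W l` are row-stochastic, and `r (k + l) = W l (r k)`. By
primitivity some `W m` has all entries at least `δ > 0`, so each application of it shrinks any
interval containing all the values `r k a` by the factor `1 - δ` (`averaging_step`). The nested
intervals close down on one number `L`, the common limit of all coordinates of `r k`
(`averaging_tendsto`), and `L > 0` because `r 0` is bounded below by a positive constant. The
quotient in question is `r (k - k₀) j / r k i` times `μ ^ (-k₀) v_j / v_i`, and the first factor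
tends to `L / L = 1`.
-/

open Filter Topology

/-- A weighted average whose weight at `b` is at least `δ` stays at a distance from both ends of
the interval `[lo, hi]` of values that is controlled by the value at `b`. -/
lemma averaging_step {ι : Type*} [Fintype ι] (w x : ι → ℝ) (hw0 : ∀ b, 0 ≤ w b)
    (hw1 : ∑ b, w b = 1) (lo hi δ : ℝ) (hx : ∀ b, lo ≤ x b ∧ x b ≤ hi) (b : ι) (hb : δ ≤ w b) :
    lo + δ * (x b - lo) ≤ ∑ c, w c * x c ∧ ∑ c, w c * x c ≤ hi - δ * (hi - x b) := by
  have h1 : w b * (x b - lo) ≤ ∑ c, w c * (x c - lo) :=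
    Finset.single_le_sum (f := fun c => w c * (x c - lo))
      (fun c _ => mul_nonneg (hw0 c) (sub_nonneg.2 (hx c).1)) (Finset.mem_univ b)
  have h2 : w b * (hi - x b) ≤ ∑ c, w c * (hi - x c) :=
    Finset.single_le_sum (f := fun c => w c * (hi - x c))
      (fun c _ => mul_nonneg (hw0 c) (sub_nonneg.2 (hx c).2)) (Finset.mem_univ b)
  simp only [mul_sub, Finset.sum_sub_distrib, ← Finset.sum_mul, hw1] at h1 h2
  have h3 := mul_le_mul_of_nonneg_right hb (sub_nonneg.2 (hx b).1)
  have h4 := mul_le_mul_of_nonneg_right hb (sub_nonneg.2 (hx b).2)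
  constructor <;> linarith

/-- Iterated averaging reaches consensus: if the averaging kernels `W l` transport `r k` to
`r (k + l)` and one of them is bounded below by `δ > 0`, all coordinates of `r k` converge to the
same limit, which is at least any lower bound of `r 0`. -/
lemma averaging_tendsto {ι : Type*} [Fintype ι] [Nonempty ι] (W : ℕ → ι → ι → ℝ)
    (r : ℕ → ι → ℝ) (hW0 : ∀ l a b, 0 ≤ W l a b) (hW1 : ∀ l a, ∑ b, W l a b = 1)
    (hr : ∀ k l a, r (k + l) a = ∑ b, W l a b * r k b)
    (m : ℕ) (δ : ℝ) (hδ : 0 < δ) (hδ1 : δ ≤ 1) (hWm : ∀ a b, δ ≤ W m a b)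
    (lo hi : ℝ) (h0 : ∀ a, lo ≤ r 0 a ∧ r 0 a ≤ hi) :
    ∃ L, lo ≤ L ∧ ∀ a, Tendsto (fun k => r k a) atTop (𝓝 L) := by
  obtain ⟨a₀⟩ := ‹Nonempty ι›
  -- Bounds on `r k` persist at all later times.
  have mono : ∀ (k : ℕ) (x y : ℝ), (∀ a, x ≤ r k a ∧ r k a ≤ y) →
      ∀ l, k ≤ l → ∀ a, x ≤ r l a ∧ r l a ≤ y := by
    intro k x y h l hl a
    obtain ⟨d, rfl⟩ := Nat.exists_eq_add_of_le hl
    have := averaging_step (W d a) (r k) (hW0 d a) (hW1 d a) x y 0 h a (hW0 d a a)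
    rw [hr]
    simpa using this
  have key : ∀ q : ℕ, ∃ x y : ℝ, y - x = (1 - δ) ^ q * (hi - lo) ∧
      ∀ a, x ≤ r (q * m) a ∧ r (q * m) a ≤ y := by
    intro q
    induction q with
    | zero => exact ⟨lo, hi, by simp, by simpa using h0⟩
    | succ q ih =>
      obtain ⟨x, y, hxy, h⟩ := ih
      refine ⟨x + δ * (r (q * m) a₀ - x), y - δ * (y - r (q * m) a₀), ?_, fun a => ?_⟩
      · rw [pow_succ]; linear_combination (1 - δ) * hxy
      · rw [Nat.succ_mul, hr]
        exact averaging_step _ _ (hW0 m a) (hW1 m a) x y δ h a₀ (hWm a a₀)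
  have hgeo : Tendsto (fun q : ℕ => (1 - δ) ^ q * (hi - lo)) atTop (𝓝 0) := by
    simpa using (tendsto_pow_atTop_nhds_zero_of_lt_one (sub_nonneg.2 hδ1)
      (by linarith)).mul_const (hi - lo)
  have close : ∀ ε > 0, ∃ N, ∀ k ≥ N, ∀ l ≥ N, ∀ a b, |r k a - r l b| < ε := by
    intro ε hε
    obtain ⟨q, hq⟩ := (hgeo.eventually (gt_mem_nhds hε)).exists
    obtain ⟨x, y, hxy, h⟩ := key q
    refine ⟨q * m, fun k hk l hl a b => ?_⟩
    have h1 := mono _ x y h k hk a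
    have h2 := mono _ x y h l hl b
    rw [abs_lt]
    constructor <;> linarith
  have hcau : CauchySeq (fun k => r k a₀) := by
    rw [Metric.cauchySeq_iff]
    intro ε hε
    obtain ⟨N, hN⟩ := close ε hε
    exact ⟨N, fun k hk l hl => by rw [Real.dist_eq]; exact hN k hk l hl a₀ a₀⟩
  obtain ⟨L, hL⟩ := cauchySeq_tendsto_of_complete hcau
  refine ⟨L, ge_of_tendsto' hL fun k => (mono 0 lo hi h0 k (Nat.zero_le k) a₀).1, fun a => ?_⟩
  have hdiff : Tendsto (fun k => r k a - r k a₀) atTop (𝓝 0) := by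
    rw [Metric.tendsto_atTop]
    intro ε hε
    obtain ⟨N, hN⟩ := close ε hε
    exact ⟨N, fun k hk => by rw [Real.dist_eq, sub_zero]; exact hN k hk k hk a a₀⟩
  simpa using hdiff.add hL

lemma pow_mulVec_eigenvector {n : ℕ} (S : Matrix (Fin n) (Fin n) ℝ) (μ : ℝ) (v : Fin n → ℝ)
    (heig : Matrix.mulVec S v = μ • v) (l : ℕ) : Matrix.mulVec (S ^ l) v = μ ^ l • v := by
  induction l with
  | zero => simp
  | succ l ih =>
    rw [pow_succ, ← Matrix.mulVec_mulVec, heig, Matrix.mulVec_smul, ih, smul_smul, pow_succ']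

lemma pow_entry_nonneg {n : ℕ} (S : Matrix (Fin n) (Fin n) ℝ) (hS : ∀ i j, 0 ≤ S i j) (l : ℕ) :
    ∀ a b, 0 ≤ (S ^ l) a b := by
  induction l with
  | zero => intro a b; rw [pow_zero, Matrix.one_apply]; split_ifs <;> norm_num
  | succ l ih =>
    intro a b
    rw [pow_succ, Matrix.mul_apply]
    exact Finset.sum_nonneg fun c _ => mul_nonneg (ih a c) (hS c b)

/-- **Perron projection limit.** Let `S` be a primitive nonnegative `n × n` real
matrix, `μ > 0` and `v` a strictly positive vector with `S · v = μ · v` (so that `μ`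
is the Perron–Frobenius eigenvalue of `S`). Then for every fixed `k₀ ∈ ℕ` and all
indices `i, j`,
`(S^(k−k₀) · 𝟙)_j / (S^k · 𝟙)_i → μ^(−k₀) · v_j / v_i` as `k → ∞`, where `𝟙` is the
all-ones vector. -/
theorem primitive_matrix_ones_ratio_limit {n : ℕ}
    (S : Matrix (Fin n) (Fin n) ℝ) (hS : ∀ i j, 0 ≤ S i j)
    (hprim : ∃ k : ℕ, ∀ i j, 0 < (S ^ k) i j)
    (μ : ℝ) (hμ : 0 < μ) (v : Fin n → ℝ) (hv : ∀ i, 0 < v i)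
    (heig : Matrix.mulVec S v = μ • v)
    (k₀ : ℕ) (i j : Fin n) :
    Tendsto
      (fun k => Matrix.mulVec (S ^ (k - k₀)) (fun _ => (1 : ℝ)) j /
        Matrix.mulVec (S ^ k) (fun _ => (1 : ℝ)) i)
      atTop (𝓝 ((μ ^ k₀)⁻¹ * (v j / v i))) := by
  obtain ⟨m, hm⟩ := hprim
  have : Nonempty (Fin n) := ⟨i⟩
  set u : ℕ → Fin n → ℝ := fun k => Matrix.mulVec (S ^ k) (fun _ => (1 : ℝ)) with hu
  let W : ℕ → Fin n → Fin n → ℝ := fun l a b => (S ^ l) a b * v b / (μ ^ l * v a)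
  let r : ℕ → Fin n → ℝ := fun k a => u k a / (μ ^ k * v a)
  have hW0 : ∀ l a b, 0 ≤ W l a b := fun l a b =>
    div_nonneg (mul_nonneg (pow_entry_nonneg S hS l a b) (hv b).le)
      (mul_pos (pow_pos hμ l) (hv a)).le
  have hW1 : ∀ l a, ∑ b, W l a b = 1 := by
    intro l a
    have h := congrFun (pow_mulVec_eigenvector S μ v heig l) a
    simp only [Matrix.mulVec, dotProduct, Pi.smul_apply, smul_eq_mul] at h
    simp only [W]
    rw [← Finset.sum_div, h, div_self (mul_pos (pow_pos hμ l) (hv a)).ne']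
  have hr : ∀ k l a, r (k + l) a = ∑ b, W l a b * r k b := by
    intro k l a
    have h : u (k + l) a = ∑ b, (S ^ l) a b * u k b := by
      simp only [hu]
      rw [add_comm, pow_add, ← Matrix.mulVec_mulVec]
      rfl
    simp only [r, W]
    rw [h, Finset.sum_div]
    refine Finset.sum_congr rfl fun b _ => ?_
    have h1 := (hv a).ne'
    have h2 := (hv b).ne'
    have h3 := hμ.ne'
    rw [pow_add]
    field_simp
  have hWm : ∀ a b, 0 < W m a b := fun a b =>
    div_pos (mul_pos (hm a b) (hv b)) (mul_pos (pow_pos hμ m) (hv a))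
  obtain ⟨p, hp⟩ := Finite.exists_min (fun p : Fin n × Fin n => W m p.1 p.2)
  have hp1 : W m p.1 p.2 ≤ 1 := by
    rw [← hW1 m p.1]
    exact Finset.single_le_sum (fun b _ => hW0 m p.1 b) (Finset.mem_univ p.2)
  obtain ⟨c, hc⟩ := Finite.exists_min (r 0)
  obtain ⟨d, hd⟩ := Finite.exists_max (r 0)
  have hr0 : 0 < r 0 c := by
    simp only [r, hu, pow_zero, Matrix.one_mulVec, one_mul]
    exact div_pos one_pos (hv c)
  obtain ⟨L, hL, hlim⟩ := averaging_tendsto W r hW0 hW1 hr m (W m p.1 p.2) (hWm _ _) hp1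
    (fun a b => hp (a, b)) (r 0 c) (r 0 d) (fun a => ⟨hc a, hd a⟩)
  have hL0 : L ≠ 0 := (hr0.trans_le hL).ne'
  have hquot : Tendsto (fun k => (μ ^ k₀)⁻¹ * (v j / v i) * (r (k - k₀) j / r k i)) atTop
      (𝓝 ((μ ^ k₀)⁻¹ * (v j / v i))) := by
    have h := (((hlim j).comp (tendsto_sub_atTop_nat k₀)).div (hlim i) hL0).const_mul
      ((μ ^ k₀)⁻¹ * (v j / v i))
    rw [div_self hL0, mul_one] at h
    exact h
  refine hquot.congr' ?_
  -- For `k < k₀` the truncated subtraction breaks the identity `μ ^ k = μ ^ (k - k₀) * μ ^ k₀`.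
  filter_upwards [eventually_ge_atTop k₀] with k hk
  have hpow : μ ^ k = μ ^ (k - k₀) * μ ^ k₀ := by rw [← pow_add, Nat.sub_add_cancel hk]
  have h1 := (hv i).ne'
  have h2 := (hv j).ne'
  have h3 := hμ.ne'
  change (μ ^ k₀)⁻¹ * (v j / v i) * (u (k - k₀) j / (μ ^ (k - k₀) * v j) / (u k i / (μ ^ k * v i)))
    = u (k - k₀) j / u k i
  rw [hpow]
  field_simp
end
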